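/- (Discrete Pólya–Szegő inequality.) Let d ≥ 2, p ≥ 1, and let u : ℤ^d → [0,∞) with Σ_x u(x)^p < ∞. Then ‖∇u*‖_p ≤ ‖∇u‖_p, where u* = R_{ℤ^d} u. Moreover, if p > 1 and the values of u are strictly decreasing, a₁(u) > a₂(u) > a₃(u) > ⋯, then equality holds if and only if there is a graph automorphism σ of ℤ^d with u = u* ∘ σ. -/

import Mathlib

open Filter Topology

noncomputable section

abbrev ZLat (d : ℕ) := Fin d → ℤ

def stdVec (d : ℕ) (i : Fin d) : Fin d → ℝ := fun j => if j = i then 1 else 0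

/-- The set of directions E⃗ ⊆ ℝ^d. -/
def Evec (d : ℕ) : Set (Fin d → ℝ) :=
  {e | (∃ i, e = stdVec d i) ∨
    (∃ i j : Fin d, i < j ∧ e = fun k => (stdVec d i k + stdVec d j k) / 2) ∨
    (∃ i j : Fin d, i < j ∧ e = fun k => (stdVec d i k - stdVec d j k) / 2)}

/-- A fixed enumeration of E⃗ (for d = 2 it is e₁, e₂, (e₁+e₂)/2, (e₁-e₂)/2). -/
def EvecList (d : ℕ) : List (Fin d → ℝ) :=
  ((List.finRange d).map (stdVec d)) ++
  ((List.finRange d).flatMap fun i => (List.finRange d).filterMap fun j =>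
    if i < j then some (fun k => (stdVec d i k + stdVec d j k) / 2) else none) ++
  ((List.finRange d).flatMap fun i => (List.finRange d).filterMap fun j =>
    if i < j then some (fun k => (stdVec d i k - stdVec d j k) / 2) else none)

/-- The n-th largest value of `u`, counted with multiplicity (1-indexed). -/
def nthLargest {α : Type*} (u : α → NNReal) (n : ℕ) : NNReal :=
  sSup {t | ∃ Ω : Finset α, Ω.card = n ∧ ∀ x ∈ Ω, t ≤ u x}

/-- The 1-indexed position of the point with doubled coordinate `m` in the
spiral order 0, 1, −1, 2, −2, … (for even m) resp. 1/2, −1/2, 3/2, −3/2, … (for odd m). -/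
def posIdx (m : ℤ) : ℕ := (if 0 < m then m else 1 - m).toNat

/-- `x` and `y` lie on a common line with direction `e`. -/
def sameLine {d : ℕ} (e : Fin d → ℝ) (x y : ZLat d) : Prop :=
  ∃ c : ℝ, (fun i => (x i : ℝ) - (y i : ℝ)) = c • e

/-- Twice the inner product ⟨e, x⟩, as an integer. -/
def pairing {d : ℕ} (e : Fin d → ℝ) (x : ZLat d) : ℤ :=
  ⌊2 * ∑ i, e i * (x i : ℝ)⌋

/-- One-step rearrangement `R_e`. -/
def stepR {d : ℕ} (e : Fin d → ℝ) (u : ZLat d → NNReal) : ZLat d → NNReal :=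
  fun x => nthLargest (fun y : {y : ZLat d // sameLine e x y} => u y.1) (posIdx (pairing e x))

/-- `R^k u` : k successive one-step rearrangements cycling through the fixed enumeration. -/
def iterR (d : ℕ) (u : ZLat d → NNReal) : ℕ → ZLat d → NNReal
  | 0 => u
  | k + 1 => stepR ((EvecList d).getD (k % (EvecList d).length) 0) (iterR d u k)

/-- The Schwarz rearrangement on ℤ^d : pointwise limit of `R^k u`. -/
def RZd (d : ℕ) (u : ZLat d → NNReal) : ZLat d → NNReal :=
  fun x => limUnder atTop fun k => iterR d u k x

def Admissible {α : Type*} (u : α → NNReal) : Prop :=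
  ∀ t : NNReal, 0 < t → {x | t < u x}.Finite

def Equimeasurable {α : Type*} (u v : α → NNReal) : Prop :=
  ∀ t : NNReal, 0 < t → Nonempty ({x | t < u x} ≃ {x | t < v x})

/-- Graph distance (ℓ¹ distance) on the lattice ℤ^d. -/
def latDist {d : ℕ} (x y : ZLat d) : ℕ := ∑ i, (x i - y i).natAbs

/-- The i-th standard basis vector of ℤ^d. -/
def latE {d : ℕ} (i : Fin d) : ZLat d := fun j => if j = i then 1 else 0

/-- ‖∇u‖_p^p : the p-Sobolev energy, summing over each edge {x, x+e_i} once. -/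
def gradEnergy (d : ℕ) (p : ℝ) (u : ZLat d → NNReal) : ENNReal :=
  ∑' (x : ZLat d) (i : Fin d), ENNReal.ofReal (|(u (x + latE i) : ℝ) - (u x : ℝ)| ^ p)

/-- ‖∇u‖_p. -/
def gradNorm (d : ℕ) (p : ℝ) (u : ZLat d → NNReal) : ENNReal :=
  gradEnergy d p u ^ (1 / p)

/-- Graph automorphism of the lattice graph ℤ^d. -/
def IsLatAuto {d : ℕ} (σ : ZLat d ≃ ZLat d) : Prop :=
  ∀ x y : ZLat d, latDist (σ x) (σ y) = 1 ↔ latDist x y = 1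

def Supermodular (G : NNReal → NNReal → NNReal) : Prop :=
  ∀ s t s₀ t₀ : NNReal, G (s + s₀) t + G s (t + t₀) ≤ G (s + s₀) (t + t₀) + G s t

def StrictlySupermodular (G : NNReal → NNReal → NNReal) : Prop :=
  ∀ s t s₀ t₀ : NNReal, 0 < s₀ → 0 < t₀ →
    G (s + s₀) t + G s (t + t₀) < G (s + s₀) (t + t₀) + G s t

/-- The values of `u` are strictly decreasing: a₁ > a₂ > a₃ > ⋯ . -/
def StrictRan {α : Type*} (u : α → NNReal) : Prop :=
  ∀ n : ℕ, 0 < n → nthLargest u (n + 1) < nthLargest u n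


/-- Submodular, nonnegative, continuous cost functions. -/
structure IsCost (K : ℝ → ℝ → ℝ) : Prop where
  nonneg : ∀ a b, 0 ≤ K a b
  sub : ∀ a a' b b', a ≤ a' → b ≤ b' → K a b + K a' b' ≤ K a b' + K a' b
  cont : Continuous fun z : ℝ × ℝ => K z.1 z.2

open Classical in
/-- One term of the energy. -/
def eTerm {V : Type*} (A : V → V → Prop) (K : ℝ → ℝ → ℝ) (u : V → NNReal) (x y : V) : ENNReal :=
  if A x y then ENNReal.ofReal (K (u x) (u y)) else 0

/-- The energy over ordered pairs. -/
def aEn {V : Type*} (A : V → V → Prop) (K : ℝ → ℝ → ℝ) (u : V → NNReal) : ENNReal :=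
  ∑' z : V × V, eTerm A K u z.1 z.2

open Classical in
/-- Polarization of a function. -/
def aPol {V : Type*} (σ : V → V) (H : V → Prop) (u : V → NNReal) (x : V) : NNReal :=
  if H x then max (u x) (u (σ x)) else min (u x) (u (σ x))

/-- Data of a good reflection. -/
structure GoodRefl {V : Type*} (A : V → V → Prop) (σ : V → V) (H : V → Prop) : Prop where
  invol : ∀ x, σ (σ x) = x
  adj : ∀ x y, A (σ x) (σ y) ↔ A x y
  total : ∀ x, ¬ H x → H (σ x)
  anti : ∀ x, H x → H (σ x) → σ x = x
  key : ∀ x y, H x → H y → σ x ≠ x → σ y ≠ y → A x (σ y) → x = y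

/-- Four-term bracket. -/
def brk {V : Type*} (A : V → V → Prop) (σ : V → V) (K : ℝ → ℝ → ℝ) (u : V → NNReal) (x y : V) :
    ENNReal :=
  eTerm A K u x y + eTerm A K u (σ x) (σ y) + (eTerm A K u x (σ y) + eTerm A K u (σ x) y)

section
variable {V : Type*} {A : V → V → Prop} {σ : V → V} {H : V → Prop} {K : ℝ → ℝ → ℝ}

lemma tsum_brk (h : GoodRefl A σ H) (u : V → NNReal) :
    ∑' z : V × V, brk A σ K u z.1 z.2 = 4 * aEn A K u := by
  let e : V ≃ V := ⟨σ, σ, h.invol, h.invol⟩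
  unfold brk
  rw [ENNReal.tsum_add, ENNReal.tsum_add, ENNReal.tsum_add]
  have h1 : ∑' z : V × V, eTerm A K u (σ z.1) (σ z.2) = aEn A K u :=
    (Equiv.prodCongr e e).tsum_eq (fun z : V × V => eTerm A K u z.1 z.2)
  have h2 : ∑' z : V × V, eTerm A K u (z.1) (σ z.2) = aEn A K u :=
    (Equiv.prodCongr (Equiv.refl V) e).tsum_eq (fun z : V × V => eTerm A K u z.1 z.2)
  have h3 : ∑' z : V × V, eTerm A K u (σ z.1) (z.2) = aEn A K u :=
    (Equiv.prodCongr e (Equiv.refl V)).tsum_eq (fun z : V × V => eTerm A K u z.1 z.2)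
  rw [h1, h2, h3]
  change aEn A K u + _ + _ = _
  ring

lemma aPol_H (_h : GoodRefl A σ H) (u : V → NNReal) {x : V} (hx : H x) :
    aPol σ H u x = max (u x) (u (σ x)) := by
  simp [aPol, hx]

lemma aPol_sH (h : GoodRefl A σ H) (u : V → NNReal) {x : V} (hx : H x) :
    aPol σ H u (σ x) = min (u x) (u (σ x)) := by
  by_cases h2 : H (σ x)
  · have := h.anti x hx h2
    simp [this, aPol]
  · simp [aPol, h2, h.invol, min_comm]

lemma brk_sx (h : GoodRefl A σ H) (u : V → NNReal) (x y : V) :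
    brk A σ K u (σ x) y = brk A σ K u x y := by
  unfold brk
  rw [h.invol]
  ring

lemma brk_sy (h : GoodRefl A σ H) (u : V → NNReal) (x y : V) :
    brk A σ K u x (σ y) = brk A σ K u x y := by
  unfold brk
  rw [h.invol]
  ring

lemma adj_left (h : GoodRefl A σ H) (x y : V) : A (σ x) y ↔ A x (σ y) := by
  rw [← h.adj, h.invol]

lemma brk_le_of_H (hK : IsCost K) (h : GoodRefl A σ H) (u : V → NNReal) (x y : V)
    (hx : H x) (hy : H y) :
    brk A σ K (aPol σ H u) x y ≤ brk A σ K u x y := by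
  by_cases hbad : x = y ∨ (A x y ↔ A x (σ y))
  · apply le_of_eq
    unfold brk eTerm
    rw [aPol_H h u hx, aPol_sH h u hx, aPol_H h u hy, aPol_sH h u hy]
    rw [show A (σ x) (σ y) = A x y from propext (h.adj x y),
      show A (σ x) y = A x (σ y) from propext (adj_left h x y)]
    rcases hbad with rfl | hbad
    · rcases le_total (u x) (u (σ x)) with h1 | h1 <;> simp only [max_eq_right h1, max_eq_left h1,
        min_eq_left h1, min_eq_right h1] <;> ring
    · rw [show A x y = A x (σ y) from propext hbad]
      rcases le_total (u x) (u (σ x)) with h1 | h1 <;>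
      rcases le_total (u y) (u (σ y)) with h2 | h2 <;>
      simp only [max_eq_right h1, max_eq_left h1,
        min_eq_left h1, min_eq_right h1, max_eq_right h2, max_eq_left h2,
        min_eq_left h2, min_eq_right h2] <;> ring
  · push Not at hbad
    have hA2 : ¬ A x (σ y) := by
      intro h1
      by_cases hsx : σ x = x
      · have : A x y := by
          rw [← h.adj, hsx]; exact h1
        tauto
      by_cases hsy : σ y = y
      · rw [hsy] at h1
        rw [hsy] at hbad
        tauto
      exact hbad.1 (h.key x y hx hy hsx hsy h1)
    have hA1 : A x y := by tauto
    unfold brk eTerm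
    rw [aPol_H h u hx, aPol_sH h u hx, aPol_H h u hy, aPol_sH h u hy]
    simp only [h.adj, adj_left h, hA1, hA2, if_true, if_false, add_zero]
    rw [← ENNReal.ofReal_add (hK.nonneg _ _) (hK.nonneg _ _),
      ← ENNReal.ofReal_add (hK.nonneg _ _) (hK.nonneg _ _)]
    apply ENNReal.ofReal_le_ofReal
    rcases le_total (u x) (u (σ x)) with h1 | h1 <;>
      rcases le_total (u y) (u (σ y)) with h2 | h2 <;>
      simp only [max_eq_right h1, max_eq_left h1,
        min_eq_left h1, min_eq_right h1, max_eq_right h2, max_eq_left h2,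
        min_eq_left h2, min_eq_right h2]
    · linarith
    · have := hK.sub (u x) (u (σ x)) (u (σ y)) (u y) h1 h2
      linarith
    · have := hK.sub (u (σ x)) (u (x)) (u y) (u (σ y)) h1 h2
      linarith
    · linarith

lemma brk_le (hK : IsCost K) (h : GoodRefl A σ H) (u : V → NNReal) (x y : V) :
    brk A σ K (aPol σ H u) x y ≤ brk A σ K u x y := by
  by_cases hx : H x <;> by_cases hy : H y
  · exact brk_le_of_H hK h u x y hx hy
  · rw [← brk_sy h, ← brk_sy h u]
    exact brk_le_of_H hK h u _ _ hx (h.total _ hy)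
  · rw [← brk_sx h, ← brk_sx h u]
    exact brk_le_of_H hK h u _ _ (h.total _ hx) hy
  · rw [← brk_sx h, ← brk_sx h u, ← brk_sy h, ← brk_sy h u]
    exact brk_le_of_H hK h u _ _ (h.total _ hx) (h.total _ hy)

lemma aEn_pol_le (hK : IsCost K) (h : GoodRefl A σ H) (u : V → NNReal) :
    aEn A K (aPol σ H u) ≤ aEn A K u := by
  have h1 : 4 * aEn A K (aPol σ H u) ≤ 4 * aEn A K u := by
    rw [← tsum_brk h, ← tsum_brk h]
    exact ENNReal.tsum_le_tsum fun z => brk_le hK h u _ _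
  exact (ENNReal.mul_le_mul_iff_right (by norm_num) (by norm_num)).1 h1

lemma pol_eq_sign (hK : IsCost K)
    (hs : ∀ a a' b b', a < a' → b < b' → K a b + K a' b' < K a b' + K a' b)
    (h : GoodRefl A σ H) (u : V → NNReal) (hfin : aEn A K u ≠ ⊤)
    (heq : aEn A K (aPol σ H u) = aEn A K u) (hirr : ∀ x, ¬ A x x)
    (x y : V) (hx : H x) (hy : H y) (hsx : σ x ≠ x) (hsy : σ y ≠ y) (hA : A x y)
    (h1 : u x < u (σ x)) : u y ≤ u (σ y) := by
  by_contra h2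
  push Not at h2
  have hA2 : ¬ A x (σ y) := by
    intro h3
    have := h.key x y hx hy hsx hsy h3
    subst this
    exact hirr _ hA
  have hlt : brk A σ K (aPol σ H u) x y < brk A σ K u x y := by
    unfold brk eTerm
    rw [aPol_H h u hx, aPol_sH h u hx, aPol_H h u hy, aPol_sH h u hy]
    simp only [h.adj, adj_left h, hA, hA2, if_true, if_false, add_zero]
    rw [← ENNReal.ofReal_add (hK.nonneg _ _) (hK.nonneg _ _),
      ← ENNReal.ofReal_add (hK.nonneg _ _) (hK.nonneg _ _)]
    simp only [max_eq_right h1.le, max_eq_left h2.le, min_eq_left h1.le, min_eq_right h2.le]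
    have := hs (u x) (u (σ x)) (u (σ y)) (u y) h1 h2
    rw [ENNReal.ofReal_lt_ofReal_iff_of_nonneg (add_nonneg (hK.nonneg _ _) (hK.nonneg _ _))]
    linarith
  have hsum : ∑' z : V × V, brk A σ K (aPol σ H u) z.1 z.2 < ∑' z : V × V, brk A σ K u z.1 z.2 := by
    refine ENNReal.tsum_lt_tsum (i := (x, y)) ?_ (fun z => brk_le hK h u _ _) hlt
    rw [tsum_brk h, heq]
    exact ENNReal.mul_ne_top (by norm_num) hfin
  rw [tsum_brk h, tsum_brk h, heq] at hsum
  exact lt_irrefl _ hsum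

lemma aEn_limit (hK : IsCost K) {v : ℕ → V → NNReal} {w : V → NNReal}
    (hv : ∀ x, Tendsto (fun n => v n x) atTop (𝓝 (w x))) {C : ENNReal}
    (hC : ∀ᶠ n in atTop, aEn A K (v n) ≤ C) : aEn A K w ≤ C := by
  unfold aEn
  apply ENNReal.summable.tsum_le_of_sum_le
  intro s
  have ht : Tendsto (fun n => ∑ z ∈ s, eTerm A K (v n) z.1 z.2) atTop
      (𝓝 (∑ z ∈ s, eTerm A K w z.1 z.2)) := by
    apply tendsto_finsetSum
    intro z _
    unfold eTerm
    split_ifs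
    · apply ENNReal.tendsto_ofReal
      have h2 : Tendsto (fun n => ((v n z.1 : ℝ), (v n z.2 : ℝ))) atTop
          (𝓝 ((w z.1 : ℝ), (w z.2 : ℝ))) :=
        Tendsto.prodMk_nhds (NNReal.tendsto_coe.2 (hv z.1)) (NNReal.tendsto_coe.2 (hv z.2))
      exact (hK.cont.tendsto _).comp h2
    · exact tendsto_const_nhds
  refine le_of_tendsto ht ?_
  filter_upwards [hC] with n hn
  exact (ENNReal.sum_le_tsum s).trans hn

lemma aEn_comp (τ : V ≃ V) (hτ : ∀ x y, A (τ x) (τ y) ↔ A x y) (u : V → NNReal) :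
    aEn A K (fun x => u (τ x)) = aEn A K u := by
  unfold aEn
  rw [← (Equiv.prodCongr τ τ).tsum_eq (fun z : V × V => eTerm A K u z.1 z.2)]
  refine tsum_congr fun z => ?_
  have := hτ z.1 z.2
  change eTerm A K (fun x => u (τ x)) z.1 z.2 = eTerm A K u (τ z.1) (τ z.2)
  unfold eTerm
  rw [show A (τ z.1) (τ z.2) = A z.1 z.2 from propext this]
end

/-- Integer linear functional. -/
def lin {d : ℕ} (c x : ZLat d) : ℤ := ∑ l, c l * x l

/-- adjacency -/
def Adj {d : ℕ} (x y : ZLat d) : Prop := latDist x y = 1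

lemma lin_add {d : ℕ} (c x y : ZLat d) : lin c (x + y) = lin c x + lin c y := by
  simp [lin, mul_add, Finset.sum_add_distrib]
lemma lin_sub {d : ℕ} (c x y : ZLat d) : lin c (x - y) = lin c x - lin c y := by
  simp [lin, mul_sub, Finset.sum_sub_distrib]
lemma lin_smul {d : ℕ} (c x : ZLat d) (t : ℤ) : lin c (t • x) = t * lin c x := by
  simp only [lin, Pi.smul_apply, smul_eq_mul, Finset.mul_sum]
  exact Finset.sum_congr rfl fun i _ => by ring
lemma lin_comm {d : ℕ} (c x : ZLat d) : lin c x = lin x c := by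
  simp [lin, mul_comm]
lemma lin_latE {d : ℕ} (c : ZLat d) (i : Fin d) : lin c (latE i) = c i := by
  simp [lin, latE]
lemma latE_lin {d : ℕ} (c : ZLat d) (i : Fin d) : lin (latE i) c = c i := by
  rw [lin_comm, lin_latE]

/-- The directions, with their doubled covector `c` and primitive integer vector `w`. -/
inductive IsDir {d : ℕ} : (Fin d → ℝ) → ZLat d → ZLat d → Prop
  | ax (i : Fin d) : IsDir (stdVec d i) ((2 : ℤ) • latE i) (latE i)
  | pl (i j : Fin d) (h : i < j) : IsDir (fun k => (stdVec d i k + stdVec d j k) / 2)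
      (latE i + latE j) (latE i + latE j)
  | mi (i j : Fin d) (h : i < j) : IsDir (fun k => (stdVec d i k - stdVec d j k) / 2)
      (latE i - latE j) (latE i - latE j)

lemma latE_self {d : ℕ} (i : Fin d) : latE i i = 1 := by simp [latE]
lemma latE_ne {d : ℕ} {i j : Fin d} (h : j ≠ i) : latE i j = 0 := by simp [latE, h]

lemma stdVec_cast {d : ℕ} (i k : Fin d) : stdVec d i k = ((latE i k : ℤ) : ℝ) := by
  simp [stdVec, latE]

lemma IsDir.two {d : ℕ} {e : Fin d → ℝ} {c w : ZLat d} (h : IsDir e c w) (k : Fin d) :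
    2 * e k = (c k : ℝ) := by
  cases h <;> simp [stdVec_cast] <;> ring

lemma IsDir.pairing {d : ℕ} {e : Fin d → ℝ} {c w : ZLat d} (h : IsDir e c w) (x : ZLat d) :
    pairing e x = lin c x := by
  unfold _root_.pairing lin
  have : 2 * ∑ i, e i * (x i : ℝ) = ((∑ l, c l * x l : ℤ) : ℝ) := by
    push_cast
    rw [Finset.mul_sum]
    exact Finset.sum_congr rfl fun i _ => by rw [← h.two]; ring
  rw [this, Int.floor_intCast]

lemma IsDir.lin_w {d : ℕ} {e : Fin d → ℝ} {c w : ZLat d} (h : IsDir e c w) : lin c w = 2 := by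
  cases h with
  | ax i => simp [lin_latE, latE_self]
  | pl i j h => simp [lin_latE, lin_add, latE_self, latE_ne h.ne, latE_ne h.ne']
  | mi i j h => simp [lin_latE, lin_sub, latE_self, latE_ne h.ne, latE_ne h.ne']

lemma IsDir.sameLine {d : ℕ} {e : Fin d → ℝ} {c w : ZLat d} (h : IsDir e c w) (x y : ZLat d) :
    sameLine e x y ↔ ∃ t : ℤ, y = x + t • w := by
  have key : ∃ i : Fin d, w i = 1 ∧ ∃ q : ℝ, q ≠ 0 ∧ ∀ k, (w k : ℝ) = q * e k := by
    cases h with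
    | ax i => exact ⟨i, latE_self i, 1, one_ne_zero, fun k => by simp [stdVec_cast]⟩
    | pl i j h =>
      exact ⟨i, by simp [latE_self, latE_ne h.ne], 2, two_ne_zero,
        fun k => by simp [stdVec_cast]; ring⟩
    | mi i j h =>
      exact ⟨i, by simp [latE_self, latE_ne h.ne], 2, two_ne_zero,
        fun k => by simp [stdVec_cast]; ring⟩
  obtain ⟨i, hi, q, hq, hk⟩ := key
  constructor
  · rintro ⟨r, hr⟩
    have hr' : ∀ k, (x k : ℝ) - y k = r * e k := fun k => by
      have := congrFun hr k; simpa using this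
    refine ⟨y i - x i, ?_⟩
    funext k
    have h1 := hr' k
    have h2 := hr' i
    have h3 := hk k
    have h4 := hk i
    rw [hi] at h4
    simp only [Pi.add_apply, Pi.smul_apply, smul_eq_mul]
    have : (y k : ℝ) = x k + (y i - x i) * w k := by
      rw [h3]
      push_cast at h4
      linear_combination -h1 + h2 * q * e k - r * e k * h4
    exact_mod_cast this
  · rintro ⟨t, rfl⟩
    refine ⟨-t * q, ?_⟩
    funext k
    simp only [Pi.add_apply, Pi.smul_apply, smul_eq_mul]
    push_cast
    rw [hk k]; ring

/-- The reflection. -/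
def rf {d : ℕ} (c w : ZLat d) (k : ℤ) (x : ZLat d) : ZLat d := x - (lin c x - k) • w

/-- The half line. -/
def InH (k m : ℤ) : Prop := (k ≤ 0 ∧ k ≤ m) ∨ (1 ≤ k ∧ m ≤ k)

lemma IsDir.lin_rf {d : ℕ} {e : Fin d → ℝ} {c w : ZLat d} (h : IsDir e c w) (k : ℤ) (x : ZLat d) :
    lin c (rf c w k x) = 2 * k - lin c x := by
  rw [rf, lin_sub, lin_smul, h.lin_w]; ring

lemma IsDir.rf_rf {d : ℕ} {e : Fin d → ℝ} {c w : ZLat d} (h : IsDir e c w) (k : ℤ) (x : ZLat d) :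
    rf c w k (rf c w k x) = x := by
  conv_lhs => rw [rf]
  rw [h.lin_rf, rf, sub_sub, ← add_smul]
  ring_nf
  try simp

lemma IsDir.rf_fix {d : ℕ} {e : Fin d → ℝ} {c w : ZLat d} (h : IsDir e c w) {k : ℤ} {x : ZLat d} :
    rf c w k x = x ↔ lin c x = k := by
  constructor
  · intro h1
    have := h.lin_rf k x
    rw [h1] at this; omega
  · intro h1
    simp [rf, h1]

/-- affine signed permutations -/
def AffSP {d : ℕ} (τ : ZLat d → ZLat d) : Prop :=
  ∃ (π : Equiv.Perm (Fin d)) (s : Fin d → ℤˣ), ∀ x i, τ x i = s i * x (π i) + τ 0 i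

lemma AffSP.dist {d : ℕ} {τ : ZLat d → ZLat d} (h : AffSP τ) (x y : ZLat d) :
    latDist (τ x) (τ y) = latDist x y := by
  obtain ⟨π, s, h⟩ := h
  unfold latDist
  rw [← Equiv.sum_comp π (fun i => (x i - y i).natAbs)]
  refine Finset.sum_congr rfl fun i _ => ?_
  rw [h x, h y]
  rcases Int.units_eq_one_or (s i) with h1 | h1 <;> rw [h1] <;> simp <;> omega

lemma AffSP.id {d : ℕ} : AffSP (fun x : ZLat d => x) :=
  ⟨1, 1, fun x i => by simp⟩

lemma AffSP.comp {d : ℕ} {τ τ' : ZLat d → ZLat d} (h : AffSP τ) (h' : AffSP τ') :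
    AffSP (fun x => τ (τ' x)) := by
  obtain ⟨π, s, h⟩ := h
  obtain ⟨π', s', h'⟩ := h'
  refine ⟨π.trans π', fun i => s i * s' (π i), fun x i => ?_⟩
  simp only [Equiv.trans_apply, Units.val_mul]
  rw [h (τ' x), h' x, h (τ' 0)]
  ring

lemma AffSP.inj {d : ℕ} {τ : ZLat d → ZLat d} (h : AffSP τ) : Function.Injective τ := by
  intro x y hxy
  have h1 := h.dist x y
  rw [hxy] at h1
  have h2 : latDist x y = 0 := by rw [← h1]; simp [latDist]
  funext i
  have := (Finset.sum_eq_zero_iff.1 h2) i (Finset.mem_univ _)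
  omega

lemma IsDir.affSP {d : ℕ} {e : Fin d → ℝ} {c w : ZLat d} (h : IsDir e c w) (k : ℤ) :
    AffSP (rf c w k) := by
  cases h with
  | ax i =>
    refine ⟨1, fun j => if j = i then -1 else 1, fun x j => ?_⟩
    have h0 : lin ((2 : ℤ) • latE i) (0 : ZLat d) = 0 := by simp [lin]
    have h1 : lin ((2 : ℤ) • latE i) x = 2 * x i := by rw [lin_comm, lin_smul, lin_latE]
    simp only [rf, h0, h1, Pi.sub_apply, Pi.smul_apply, smul_eq_mul, latE, Pi.zero_apply,
      Equiv.Perm.coe_one, id]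
    split_ifs with h
    · subst h; simp; ring
    · simp
  | pl i j h =>
    refine ⟨Equiv.swap i j, fun l => if l = i ∨ l = j then -1 else 1, fun x l => ?_⟩
    have h0 : lin (latE i + latE j) (0 : ZLat d) = 0 := by simp [lin]
    have h1 : lin (latE i + latE j) x = x i + x j := by
      rw [lin_comm, lin_add, lin_latE, lin_latE]
    simp only [rf, h0, h1, Pi.sub_apply, Pi.smul_apply, Pi.add_apply, smul_eq_mul, latE,
      Pi.zero_apply]
    by_cases hi : l = i
    · subst hi; simp [h.ne]; ring
    · by_cases hj : l = j
      · subst hj; simp [h.ne']; ring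
      · simp [hi, hj, Equiv.swap_apply_of_ne_of_ne hi hj]
  | mi i j h =>
    refine ⟨Equiv.swap i j, fun l => 1, fun x l => ?_⟩
    have h0 : lin (latE i - latE j) (0 : ZLat d) = 0 := by simp [lin]
    have h1 : lin (latE i - latE j) x = x i - x j := by
      rw [lin_comm, lin_sub, lin_latE, lin_latE]
    simp only [rf, h0, h1, Pi.sub_apply, Pi.smul_apply, smul_eq_mul, latE,
      Pi.zero_apply]
    by_cases hi : l = i
    · subst hi; simp [h.ne]; ring
    · by_cases hj : l = j
      · subst hj; simp [h.ne']; ring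
      · simp [hi, hj, Equiv.swap_apply_of_ne_of_ne hi hj]

lemma latDist_ge_one {d : ℕ} (i : Fin d) (x y : ZLat d) : (x i - y i).natAbs ≤ latDist x y :=
  Finset.single_le_sum (f := fun i => (x i - y i).natAbs) (fun _ _ => Nat.zero_le _)
    (Finset.mem_univ i)

lemma latDist_ge_two {d : ℕ} {i j : Fin d} (h : i ≠ j) (x y : ZLat d) :
    (x i - y i).natAbs + (x j - y j).natAbs ≤ latDist x y := by
  have := Finset.sum_le_sum_of_subset (f := fun i => (x i - y i).natAbs)
    (Finset.subset_univ ({i, j} : Finset (Fin d)))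
  rw [Finset.sum_pair h] at this
  exact this

lemma adj_irrefl {d : ℕ} (x : ZLat d) : ¬ Adj x x := by simp [Adj, latDist]

lemma IsDir.good {d : ℕ} {e : Fin d → ℝ} {c w : ZLat d} (h : IsDir e c w) (k : ℤ) :
    GoodRefl Adj (rf c w k) (fun x => InH k (lin c x)) where
  invol := h.rf_rf k
  adj x y := by simp only [Adj]; rw [(h.affSP k).dist]
  total x hx := by
    rw [h.lin_rf]; unfold InH at *; omega
  anti x h1 h2 := by
    rw [h.rf_fix]
    rw [h.lin_rf] at h2; unfold InH at *; omega
  key x y hx hy hsx hsy hA := by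
    rw [Ne, h.rf_fix] at hsx hsy
    have hm := h.lin_rf k y
    unfold Adj at hA
    cases h with
    | ax i =>
      have h1 : ∀ x, lin ((2 : ℤ) • latE i) x = 2 * x i := fun x => by
        rw [lin_comm, lin_smul, lin_latE]
      rw [h1, h1] at hm
      rw [h1] at hsx hsy hx hy
      have h2 := latDist_ge_one i x (rf ((2 : ℤ) • latE i) (latE i) k y)
      funext j
      by_cases hj : j = i
      · subst hj; unfold InH at *; omega
      · have h3 := latDist_ge_two hj x (rf ((2 : ℤ) • latE i) (latE i) k y)
        have h4 : rf ((2 : ℤ) • latE i) (latE i) k y j = y j := by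
          simp [rf, latE_ne hj]
        rw [h4] at h3
        unfold InH at *; omega
    | pl i j h =>
      have h1 : ∀ x, lin (latE i + latE j) x = x i + x j := fun x => by
        rw [lin_comm, lin_add, lin_latE, lin_latE]
      rw [h1, h1] at hm
      rw [h1] at hsx hsy hx hy
      have h2 := latDist_ge_two h.ne x (rf (latE i + latE j) (latE i + latE j) k y)
      exfalso
      unfold InH at *; omega
    | mi i j h =>
      have h1 : ∀ x, lin (latE i - latE j) x = x i - x j := fun x => by
        rw [lin_comm, lin_sub, lin_latE, lin_latE]
      rw [h1, h1] at hm
      rw [h1] at hsx hsy hx hy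
      have h2 := latDist_ge_two h.ne x (rf (latE i - latE j) (latE i - latE j) k y)
      exfalso
      unfold InH at *; omega

/-- weights -/
def gw (d : ℕ) : ZLat d := fun i => (d : ℤ) - i

/-- The potential. -/
def pot {d : ℕ} (x : ZLat d) : ℤ := (2 * d + 1 : ℤ) * lin x x - 2 * lin (gw d) x

lemma pot_nonneg {d : ℕ} (x : ZLat d) : 0 ≤ pot x := by
  unfold pot lin
  rw [Finset.mul_sum, Finset.mul_sum, ← Finset.sum_sub_distrib]
  refine Finset.sum_nonneg fun i _ => ?_
  have h1 : (0 : ℤ) < gw d i := by simp [gw]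
  have h2 : gw d i ≤ d := by simp [gw]
  have h3 : |x i| ≤ x i * x i := by
    rcases Int.lt_trichotomy 0 (x i) with h | h | h
    · rw [abs_of_pos h]; nlinarith
    · simp [← h]
    · rw [abs_of_neg h]; nlinarith
  have h4 := le_abs_self (x i)
  have h5 := abs_nonneg (x i)
  nlinarith [mul_le_mul_of_nonneg_left h4 h1.le, mul_le_mul_of_nonneg_right h2 h5,
    mul_le_mul_of_nonneg_left h3 (Int.natCast_nonneg d)]

/-- difference of potential under reflection -/
lemma IsDir.pot_rf {d : ℕ} {e : Fin d → ℝ} {c w : ZLat d} (h : IsDir e c w) (k : ℤ) (x : ZLat d) :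
    ∃ a G : ℤ, 0 < a ∧ 0 < G ∧ G < 2 * d + 1 ∧
      pot (rf c w k x) = pot x + a * (lin c x - k) * (G - (2 * d + 1) * k) := by
  have hexp : ∀ r : ℤ, pot (x - r • w) = pot x + (2 * d + 1) * (r * r * lin w w - 2 * r * lin w x)
      + 2 * r * lin (gw d) w := by
    intro r
    unfold pot
    rw [lin_sub, lin_comm (x - r • w), lin_comm (x - r • w), lin_sub, lin_sub, lin_smul, lin_smul,
      lin_comm (r • w) x, lin_comm (r • w) w, lin_smul, lin_smul, lin_comm x w,
      lin_sub, lin_smul]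
    ring
  rw [rf, hexp]
  cases h with
  | ax i =>
    refine ⟨1, 2 * gw d i, one_pos, ?_, ?_, ?_⟩
    · simp [gw]
    · simp only [gw]; omega
    · rw [lin_comm _ x, lin_smul]
      rw [lin_comm x, latE_lin, latE_lin, lin_latE, latE_self]; ring
  | pl i j h =>
    refine ⟨2, gw d i + gw d j, two_pos, ?_, ?_, ?_⟩
    · simp only [gw]; omega
    · simp only [gw]; omega
    · rw [lin_comm _ x, lin_add]
      have hw : lin (latE i + latE j) (latE i + latE j) = 2 := (IsDir.pl i j h).lin_w
      simp only [hw, lin_add, lin_latE]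
      ring
  | mi i j h =>
    have hij : (i : ℕ) < j := h
    refine ⟨2, gw d i - gw d j, two_pos, ?_, ?_, ?_⟩
    · simp only [gw]; omega
    · simp only [gw]; omega
    · rw [lin_comm _ x, lin_sub]
      have hw : lin (latE i - latE j) (latE i - latE j) = 2 := (IsDir.mi i j h).lin_w
      simp only [hw, lin_sub, lin_latE]
      ring

lemma IsDir.pot_lt {d : ℕ} {e : Fin d → ℝ} {c w : ZLat d} (h : IsDir e c w) (k : ℤ) (x : ZLat d)
    (hx : ¬ InH k (lin c x)) : pot (rf c w k x) < pot x := by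
  obtain ⟨a, G, ha, hG, hG2, he⟩ := h.pot_rf k x
  rw [he]
  have : (lin c x - k) * (G - (2 * d + 1) * k) < 0 := by
    unfold InH at hx
    rcases Int.lt_or_le 0 k with hk | hk
    · have h1 : 0 < lin c x - k := by omega
      have h2 : G - (2 * d + 1) * k < 0 := by nlinarith
      nlinarith
    · have h1 : lin c x - k < 0 := by omega
      have h2 : 0 < G - (2 * d + 1) * k := by nlinarith
      nlinarith
  nlinarith

/-- connectivity of half spaces -/
lemma conn {d : ℕ} (c : ZLat d) (k : ℤ) (g : ZLat d → Prop)
    (hg : ∀ x y, lin c x < k → lin c y < k → Adj x y → g x → g y) :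
    ∀ n x y, latDist x y = n → lin c x < k → lin c y < k → g x → g y := by
  intro n
  induction n with
  | zero =>
    intro x y h _ _ hx
    have : x = y := by
      funext i
      have := (Finset.sum_eq_zero_iff.1 h) i (Finset.mem_univ _)
      omega
    rwa [← this]
  | succ n ih =>
    intro x y h hx hy gx
    obtain ⟨i, hi⟩ : ∃ i, x i ≠ y i := by
      by_contra hcon
      push Not at hcon
      have : latDist x y = 0 := by simp [latDist, hcon]
      omega
    obtain ⟨s, hs, hs2⟩ : ∃ s : ℤ, s.natAbs = 1 ∧
        (x i - y i).natAbs = (x i + s - y i).natAbs + 1 := by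
      rcases lt_or_gt_of_ne hi with h1 | h1
      · exact ⟨1, rfl, by omega⟩
      · exact ⟨-1, rfl, by omega⟩
    have hd1 : latDist x (x + s • latE i) = 1 := by
      unfold latDist
      rw [Finset.sum_eq_single i]
      · simp [latE_self, hs]
      · intro j _ hj; simp [latE_ne hj]
      · simp
    have hd2 : latDist (y - s • latE i) y = 1 := by
      unfold latDist
      rw [Finset.sum_eq_single i]
      · simp [latE_self, hs]
      · intro j _ hj; simp [latE_ne hj]
      · simp
    have hd3 : latDist (x + s • latE i) y = n := by
      have e1 := Finset.add_sum_erase Finset.univ (fun j => (x j - y j).natAbs) (Finset.mem_univ i)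
      have e2 := Finset.add_sum_erase Finset.univ (fun j => ((x + s • latE i) j - y j).natAbs)
        (Finset.mem_univ i)
      have e3 : ∑ j ∈ Finset.univ.erase i, ((x + s • latE i) j - y j).natAbs =
          ∑ j ∈ Finset.univ.erase i, (x j - y j).natAbs := by
        refine Finset.sum_congr rfl fun j hj => ?_
        simp [latE_ne (Finset.ne_of_mem_erase hj)]
      have e4 : ((x + s • latE i) i - y i).natAbs = (x i + s - y i).natAbs := by
        simp [latE_self]
      unfold latDist at h ⊢
      omega
    have hd4 : latDist x (y - s • latE i) = n := by
      rw [← hd3]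
      unfold latDist
      refine Finset.sum_congr rfl fun j _ => ?_
      simp only [Pi.add_apply, Pi.sub_apply]
      congr 1; ring
    rcases Int.lt_or_le 0 (s * c i) with h1 | h1
    · have hm : lin c (y - s • latE i) < k := by
        rw [lin_sub, lin_smul, lin_latE]; omega
      exact hg _ _ hm hy hd2 (ih _ _ hd4 hx hm gx)
    · have hm : lin c (x + s • latE i) < k := by
        rw [lin_add, lin_smul, lin_latE]; omega
      exact ih _ _ hd3 hm hy (hg _ _ hx hm hd1 gx)

lemma adm_bdd {α : Type*} {v : α → NNReal} (h : Admissible v) : ∃ M, ∀ x, v x ≤ M := by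
  have hf := h 1 one_pos
  obtain ⟨M, hM⟩ := (hf.image v).bddAbove
  refine ⟨max M 1, fun x => ?_⟩
  by_cases hx : 1 < v x
  · exact (hM ⟨x, hx, rfl⟩).trans (le_max_left _ _)
  · exact (not_lt.1 hx).trans (le_max_right _ _)

lemma nth_bdd {α : Type*} {v : α → NNReal} (h : Admissible v) {n : ℕ} (hn : 1 ≤ n) :
    BddAbove {t | ∃ Ω : Finset α, Ω.card = n ∧ ∀ x ∈ Ω, t ≤ v x} := by
  obtain ⟨M, hM⟩ := adm_bdd h
  refine ⟨M, ?_⟩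
  rintro s ⟨Ω, hc, hΩ⟩
  obtain ⟨x, hx⟩ := Finset.card_pos.1 (by omega : 0 < Ω.card)
  exact (hΩ x hx).trans (hM x)

lemma lt_nthLargest {α : Type*} {v : α → NNReal} (h : Admissible v) {n : ℕ} (hn : 1 ≤ n)
    {t : NNReal} (ht : 0 < t) : t < nthLargest v n ↔ n ≤ {x | t < v x}.ncard := by
  constructor
  · intro h1
    obtain ⟨s, ⟨Ω, hc, hΩ⟩, hs⟩ := exists_lt_of_lt_csSup' h1
    rw [← hc, ← Set.ncard_coe_finset]
    exact Set.ncard_le_ncard (fun x hx => lt_of_lt_of_le hs (hΩ x hx)) (h t ht)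
  · intro h1
    rw [Set.ncard_eq_toFinset_card _ (h t ht)] at h1
    obtain ⟨Ω, hsub, hc⟩ := Finset.exists_subset_card_eq h1
    have hne : Ω.Nonempty := Finset.card_pos.1 (by omega)
    have h2 : t < Ω.inf' hne v := by
      rw [Finset.lt_inf'_iff]
      intro x hx
      simpa using hsub hx
    refine lt_of_lt_of_le h2 (le_csSup (nth_bdd h hn) ⟨Ω, hc, fun x hx => ?_⟩)
    exact Finset.inf'_le _ hx

/-- polarization in direction `c, w` -/
def pol {d : ℕ} (c w : ZLat d) (k : ℤ) (u : ZLat d → NNReal) : ZLat d → NNReal :=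
  aPol (rf c w k) (fun x => InH k (lin c x)) u

/-- the enumeration of the integers where each integer is hit infinitely often -/
def kseq (n : ℕ) : ℤ := Equiv.intEquivNat.symm (Nat.unpair n).1

lemma kseq_often (k : ℤ) (N : ℕ) : ∃ n, N ≤ n ∧ kseq n = k :=
  ⟨Nat.pair (Equiv.intEquivNat k) N, Nat.right_le_pair _ _, by simp [kseq]⟩

def polSeq {d : ℕ} (c w : ZLat d) (u : ZLat d → NNReal) : ℕ → ZLat d → NNReal
  | 0 => u
  | n + 1 => pol c w (kseq n) (polSeq c w u n)

/-- set potential -/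
def sPot {d : ℕ} (Ω : Set (ZLat d)) : ℕ := ∑ᶠ x ∈ Ω, (pot x).toNat

def Dec {d : ℕ} (Ω Ω' : Set (ZLat d)) : Prop :=
  sPot Ω' ≤ sPot Ω ∧ (sPot Ω' = sPot Ω → Ω' = Ω)

lemma Dec.refl {d : ℕ} (Ω : Set (ZLat d)) : Dec Ω Ω := ⟨le_rfl, fun _ => rfl⟩

lemma Dec.trans {d : ℕ} {Ω Ω' Ω'' : Set (ZLat d)} (h : Dec Ω Ω') (h' : Dec Ω' Ω'') : Dec Ω Ω'' := by
  refine ⟨h'.1.trans h.1, fun he => ?_⟩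
  have h1 := h.1
  have h2 := h'.1
  rw [h'.2 (by omega), h.2 (by omega)]

lemma Dec.seq {d : ℕ} {Ω : ℕ → Set (ZLat d)} (h : ∀ n, Dec (Ω n) (Ω (n + 1))) (N n : ℕ)
    (hn : N ≤ n) : Dec (Ω N) (Ω n) := by
  induction n, hn using Nat.le_induction with
  | base => exact Dec.refl _
  | succ n _ ih => exact ih.trans (h n)

lemma stabilize {d : ℕ} {Ω : ℕ → Set (ZLat d)} (h : ∀ n, Dec (Ω n) (Ω (n + 1))) :
    ∃ N, ∀ n, N ≤ n → Ω n = Ω N := by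
  have hex : ∃ s, ∃ N, sPot (Ω N) = s := ⟨_, 0, rfl⟩
  classical
  obtain ⟨N, hN⟩ := Nat.find_spec hex
  refine ⟨N, fun n hn => ?_⟩
  have h1 := Dec.seq h N n hn
  refine h1.2 (le_antisymm h1.1 ?_)
  rw [hN]
  exact Nat.find_min' hex ⟨n, rfl⟩

lemma pol_level {d : ℕ} {e : Fin d → ℝ} {c w : ZLat d} (h : IsDir e c w) (k : ℤ)
    (u : ZLat d → NNReal) (t : NNReal) (hf : {x | t < u x}.Finite) :
    ∃ φ : ZLat d → ZLat d, Set.InjOn φ {x | t < u x} ∧ φ '' {x | t < u x} = {x | t < pol c w k u x} ∧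
      (∀ x, ∃ s : ℤ, φ x = x + s • w) ∧ (∀ x, φ x ≠ x → pot (φ x) < pot x) := by
  classical
  set Ω := {x | t < u x} with hΩ
  have hmem : ∀ x, t < pol c w k u x ↔ (if InH k (lin c x) then x ∈ Ω ∨ rf c w k x ∈ Ω
      else x ∈ Ω ∧ rf c w k x ∈ Ω) := by
    intro x
    unfold pol aPol
    split_ifs <;> simp [hΩ]
  have hinv := h.rf_rf k
  have hg := h.good k
  refine ⟨fun x => if ¬ InH k (lin c x) ∧ rf c w k x ∉ Ω then rf c w k x else x, ?_, ?_, ?_, ?_⟩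
  · intro x hx y hy hxy
    simp only at hxy
    split_ifs at hxy with h1 h2 h2
    · rw [← hinv x, hxy, hinv]
    · rw [hxy] at h1; exact absurd hy h1.2
    · rw [← hxy] at h2; exact absurd hx h2.2
    · exact hxy
  · ext y
    simp only [Set.mem_image, Set.mem_setOf_eq]
    rw [hmem]
    constructor
    · rintro ⟨x, hx, rfl⟩
      split_ifs with h1 h2 h3
      · rw [hinv]; exact Or.inr hx
      · exact absurd (hg.total _ h1.1) h2
      · exact Or.inl hx
      · push Not at h1
        exact ⟨hx, h1 h3⟩
    · split_ifs with h1
      · intro h2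
        by_cases h3 : y ∈ Ω
        · exact ⟨y, h3, by simp [h1]⟩
        · have h4 := h2.resolve_left h3
          refine ⟨rf c w k y, h4, ?_⟩
          rw [hinv]
          rw [if_pos]
          refine ⟨fun h5 => ?_, h3⟩
          rw [hg.anti y h1 h5] at h4
          exact h3 h4
      · rintro ⟨h2, h3⟩
        exact ⟨y, h2, by simp [h3]⟩
  · intro x
    simp only
    split_ifs
    · exact ⟨-(lin c x - k), by rw [rf, neg_smul, sub_eq_add_neg]⟩
    · exact ⟨0, by simp⟩
  · intro x
    simp only
    split_ifs with h1
    · intro _; exact h.pot_lt k x h1.1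
    · intro h2; exact absurd rfl h2

lemma pol_dec {d : ℕ} {e : Fin d → ℝ} {c w : ZLat d} (h : IsDir e c w) (k : ℤ)
    (u : ZLat d → NNReal) (t : NNReal) (hf : {x | t < u x}.Finite) :
    {x | t < pol c w k u x}.Finite ∧ Dec {x | t < u x} {x | t < pol c w k u x} ∧
    {x | t < pol c w k u x}.ncard = {x | t < u x}.ncard ∧
    ∀ x, ({x | t < pol c w k u x} ∩ {y | ∃ s : ℤ, y = x + s • w}).ncard =
      ({x | t < u x} ∩ {y | ∃ s : ℤ, y = x + s • w}).ncard := by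
  obtain ⟨φ, hinj, him, hline, hpot⟩ := pol_level h k u t hf
  rw [← him]
  refine ⟨hf.image _, ⟨?_, ?_⟩, Set.ncard_image_of_injOn hinj, ?_⟩
  · unfold sPot
    rw [finsum_mem_image hinj, finsum_mem_eq_finite_toFinset_sum _ hf,
      finsum_mem_eq_finite_toFinset_sum _ hf]
    refine Finset.sum_le_sum fun x _ => ?_
    by_cases hx : φ x = x
    · rw [hx]
    · exact Int.toNat_le_toNat (hpot x hx).le
  · unfold sPot
    rw [finsum_mem_image hinj, finsum_mem_eq_finite_toFinset_sum _ hf,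
      finsum_mem_eq_finite_toFinset_sum _ hf]
    intro hs
    have hle : ∀ x ∈ hf.toFinset, (pot (φ x)).toNat ≤ (pot x).toNat := fun x _ => by
      by_cases hx : φ x = x
      · rw [hx]
      · exact Int.toNat_le_toNat (hpot x hx).le
    have := (Finset.sum_eq_sum_iff_of_le hle).1 hs
    have hid : ∀ x ∈ {x | t < u x}, φ x = x := by
      intro x hx
      by_contra hne
      have h1 := this x (by simpa using hx)
      have h2 := hpot x hne
      have h3 := pot_nonneg (φ x)
      omega
    ext y
    constructor
    · rintro ⟨x, hx, rfl⟩
      rw [hid x hx]; exact hx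
    · intro hy
      exact ⟨y, hy, hid y hy⟩
  · intro x
    have : φ '' {x | t < u x} ∩ {y | ∃ s : ℤ, y = x + s • w} =
        φ '' ({x | t < u x} ∩ {y | ∃ s : ℤ, y = x + s • w}) := by
      ext y
      constructor
      · rintro ⟨⟨z, hz, rfl⟩, s, hs⟩
        obtain ⟨s', hs'⟩ := hline z
        refine ⟨z, ⟨hz, s - s', ?_⟩, rfl⟩
        rw [sub_smul, ← add_sub_assoc, ← hs, hs', add_sub_cancel_right]
      · rintro ⟨z, ⟨hz, s, hs⟩, rfl⟩
        obtain ⟨s', hs'⟩ := hline z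
        refine ⟨⟨z, hz, rfl⟩, s + s', ?_⟩
        rw [add_smul, ← add_assoc, ← hs, hs']
    rw [this]
    exact Set.ncard_image_of_injOn (hinj.mono Set.inter_subset_left)

lemma posIdx_pos (m : ℤ) : 1 ≤ posIdx m := by
  unfold posIdx; split_ifs <;> omega

lemma InH_iff {k a b : ℤ} (h : a + b = 2 * k) : InH k a ↔ posIdx a ≤ posIdx b := by
  unfold posIdx InH
  split_ifs <;> omega

lemma posIdx_inj {a b t : ℤ} (h : a = b + 2 * t) (h2 : posIdx a = posIdx b) : t = 0 := by
  unfold posIdx at h2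
  split_ifs at h2 <;> omega

lemma posIdx_surj (m : ℤ) (j : ℕ) (hj : 1 ≤ j) : ∃ t : ℤ, posIdx (m + 2 * t) = j := by
  by_cases h : (m - j) % 2 = 0
  · refine ⟨(j - m) / 2, ?_⟩
    have : m + 2 * ((j - m) / 2) = j := by omega
    rw [this]; unfold posIdx; split_ifs <;> omega
  · refine ⟨(1 - j - m) / 2, ?_⟩
    have : m + 2 * ((1 - j - m) / 2) = 1 - j := by omega
    rw [this]; unfold posIdx; split_ifs <;> omega

/-- lower sets along lines -/
def Lower {d : ℕ} (c w : ZLat d) (Ω : Set (ZLat d)) : Prop :=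
  ∀ y ∈ Ω, ∀ s : ℤ, posIdx (lin c (y + s • w)) ≤ posIdx (lin c y) → y + s • w ∈ Ω

lemma lower_of_pol {d : ℕ} {e : Fin d → ℝ} {c w : ZLat d} (h : IsDir e c w)
    (u : ℤ → ZLat d → NNReal) (t : NNReal) (Ω : Set (ZLat d)) (h1 : ∀ k, {x | t < u k x} = Ω)
    (h2 : ∀ k, {x | t < pol c w k (u k) x} = Ω) : Lower c w Ω := by
  intro y hy s hs
  set k := lin c y + s with hk
  have hrf : rf c w k (y + s • w) = y := by
    rw [rf, lin_add, lin_smul, h.lin_w, hk, add_sub_assoc, ← sub_smul]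
    ring_nf
    try simp
  have hH : InH k (lin c (y + s • w)) := by
    rw [InH_iff (b := lin c y)]
    · exact hs
    · rw [lin_add, lin_smul, h.lin_w]; omega
  rw [← h2 k]
  change t < pol c w k (u k) (y + s • w)
  unfold pol aPol
  rw [if_pos hH, hrf]
  rw [← h1 k] at hy
  exact lt_max_of_lt_right hy

lemma Lower.mem_iff {d : ℕ} {e : Fin d → ℝ} {c w : ZLat d} (h : IsDir e c w)
    {Ω : Set (ZLat d)} (hL : Lower c w Ω) (hf : Ω.Finite) (x : ZLat d) :
    x ∈ Ω ↔ posIdx (lin c x) ≤ (Ω ∩ {y | ∃ s : ℤ, y = x + s • w}).ncard := by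
  have hlin : ∀ s : ℤ, lin c (x + s • w) = lin c x + 2 * s := fun s => by
    rw [lin_add, lin_smul, h.lin_w]; ring
  set n := posIdx (lin c x) with hn
  have hfL : (Ω ∩ {y | ∃ s : ℤ, y = x + s • w}).Finite := hf.subset Set.inter_subset_left
  constructor
  · intro hx
    have hsub : Set.Icc 1 n ⊆ (fun y => posIdx (lin c y)) ''
        (Ω ∩ {y | ∃ s : ℤ, y = x + s • w}) := by
      intro j hj
      obtain ⟨s, hs⟩ := posIdx_surj (lin c x) j hj.1
      rw [← hlin] at hs
      exact ⟨x + s • w, ⟨hL x hx s (by rw [hs]; exact hj.2), s, rfl⟩, hs⟩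
    have h1 := Set.ncard_le_ncard hsub (hfL.image _)
    have h2 := Set.ncard_image_le (f := fun y => posIdx (lin c y)) hfL
    have h3 : (Set.Icc 1 n).ncard = n := by
      rw [Set.ncard_eq_toFinset_card']; simp
    omega
  · intro hle
    by_contra hx
    have hinj : Set.InjOn (fun y => posIdx (lin c y)) (Ω ∩ {y | ∃ s : ℤ, y = x + s • w}) := by
      rintro _ ⟨_, s, rfl⟩ _ ⟨_, s', rfl⟩ he
      simp only [hlin] at he
      have := posIdx_inj (a := lin c x + 2 * s) (b := lin c x + 2 * s') (t := s - s') (by ring) he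
      have : s = s' := by omega
      rw [this]
    have hsub : (fun y => posIdx (lin c y)) '' (Ω ∩ {y | ∃ s : ℤ, y = x + s • w}) ⊆
        Set.Icc 1 (n - 1) := by
      rintro _ ⟨y, ⟨hy, s, hs⟩, rfl⟩
      refine ⟨posIdx_pos _, ?_⟩
      by_contra hcon
      have h1 : y + (-s) • w = x := by rw [hs, neg_smul, add_neg_cancel_right]
      apply hx
      rw [← h1]
      apply hL y hy
      rw [h1]
      simp only at hcon
      omega
    have h1 := Set.ncard_le_ncard hsub (Set.finite_Icc _ _)
    rw [Set.ncard_image_of_injOn hinj] at h1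
    have h3 : (Set.Icc 1 (n - 1)).ncard = n - 1 := by
      rw [Set.ncard_eq_toFinset_card']; simp
    have := posIdx_pos (lin c x)
    omega

lemma lt_stepR {d : ℕ} {e : Fin d → ℝ} {c w : ZLat d} (h : IsDir e c w) {u : ZLat d → NNReal}
    (hu : Admissible u) {t : NNReal} (ht : 0 < t) (x : ZLat d) :
    t < stepR e u x ↔ posIdx (lin c x) ≤
      ({x | t < u x} ∩ {y | ∃ s : ℤ, y = x + s • w}).ncard := by
  unfold stepR
  have hadm : Admissible (fun y : {y : ZLat d // sameLine e x y} => u y.1) := by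
    intro s hs
    have := Set.Finite.preimage (f := (Subtype.val : {y : ZLat d // sameLine e x y} → ZLat d))
      (Set.injOn_of_injective Subtype.val_injective) (hu s hs)
    exact this
  rw [h.pairing, lt_nthLargest hadm (posIdx_pos _) ht]
  have : ({x | t < u x} ∩ {y | ∃ s : ℤ, y = x + s • w}) =
      Subtype.val '' {y : {y : ZLat d // sameLine e x y} | t < u y.1} := by
    ext y
    simp only [Set.mem_inter_iff, Set.mem_setOf_eq, Set.mem_image, Subtype.exists,
      exists_and_right, exists_eq_right, h.sameLine]
    tauto
  rw [this, Set.ncard_image_of_injective _ Subtype.val_injective]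

/-- main facts about one-step rearrangements on level sets -/
lemma stepR_level {d : ℕ} {e : Fin d → ℝ} {c w : ZLat d} (h : IsDir e c w) {u : ZLat d → NNReal}
    (hu : Admissible u) {t : NNReal} (ht : 0 < t) :
    (∃ N, ∀ n, N ≤ n → {x | t < polSeq c w u n x} = {x | t < stepR e u x}) ∧
    {x | t < stepR e u x}.Finite ∧ Dec {x | t < u x} {x | t < stepR e u x} ∧
    {x | t < stepR e u x}.ncard = {x | t < u x}.ncard ∧
    Lower c w {x | t < stepR e u x} := by
  have hfin : ∀ n, {x | t < polSeq c w u n x}.Finite := by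
    intro n
    induction n with
    | zero => exact hu t ht
    | succ n ih => exact (pol_dec h (kseq n) _ t ih).1
  have hdec : ∀ n, Dec {x | t < polSeq c w u n x} {x | t < polSeq c w u (n + 1) x} :=
    fun n => (pol_dec h (kseq n) _ t (hfin n)).2.1
  have hcard : ∀ n, {x | t < polSeq c w u n x}.ncard = {x | t < u x}.ncard := by
    intro n
    induction n with
    | zero => rfl
    | succ n ih => rw [← ih]; exact (pol_dec h (kseq n) _ t (hfin n)).2.2.1
  have hline : ∀ n x, ({x | t < polSeq c w u n x} ∩ {y | ∃ s : ℤ, y = x + s • w}).ncard =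
      ({x | t < u x} ∩ {y | ∃ s : ℤ, y = x + s • w}).ncard := by
    intro n x
    induction n with
    | zero => rfl
    | succ n ih => rw [← ih]; exact (pol_dec h (kseq n) _ t (hfin n)).2.2.2 x
  obtain ⟨N, hN⟩ := stabilize hdec
  have hlow : Lower c w {x | t < polSeq c w u N x} := by
    choose m hm hk using fun k : ℤ => kseq_often k N
    refine lower_of_pol h (fun k => polSeq c w u (m k)) t _ (fun k => hN _ (hm k)) (fun k => ?_)
    have h1 := hN (m k + 1) ((hm k).trans (Nat.le_succ _))
    rw [← h1]
    change _ = {x | t < pol c w (kseq (m k)) (polSeq c w u (m k)) x}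
    rw [hk k]
  have heq : {x | t < stepR e u x} = {x | t < polSeq c w u N x} := by
    ext x
    rw [hlow.mem_iff h (hfin N), hline]
    exact lt_stepR h hu ht x
  rw [heq]
  exact ⟨⟨N, hN⟩, hfin N, Dec.seq (Ω := fun n => {x | t < polSeq c w u n x}) hdec 0 N (Nat.zero_le _), hcard N, hlow⟩

lemma tendsto_of_levels {s : ℕ → NNReal} {w : NNReal}
    (h : ∀ t, 0 < t → ∀ᶠ n in atTop, (t < s n ↔ t < w)) : Tendsto s atTop (𝓝 w) := by
  rw [tendsto_order]
  constructor
  · intro a ha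
    obtain ⟨t, h1, h2⟩ := exists_between ha
    filter_upwards [h t (lt_of_le_of_lt zero_le h1)] with n hn
    exact h1.trans (hn.2 h2)
  · intro b hb
    obtain ⟨t, h1, h2⟩ := exists_between hb
    filter_upwards [h t (lt_of_le_of_lt zero_le h1)] with n hn
    exact lt_of_le_of_lt (not_lt.1 fun h3 => absurd (hn.1 h3) h1.not_gt) h2

lemma lim_exists {s : ℕ → NNReal} {M : NNReal} (hM : ∀ n, s n ≤ M)
    (h : ∀ t, 0 < t → (∀ᶠ n in atTop, t < s n) ∨ (∀ᶠ n in atTop, ¬ t < s n)) :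
    ∃ w, Tendsto s atTop (𝓝 w) := by
  have hb : BddAbove {t | ∀ᶠ n in atTop, t < s n} :=
    ⟨M, fun t ht => by
      obtain ⟨n, hn⟩ := ht.exists
      exact hn.le.trans (hM n)⟩
  refine ⟨sSup {t | ∀ᶠ n in atTop, t < s n}, ?_⟩
  rw [tendsto_order]
  constructor
  · intro a ha
    obtain ⟨t, h1, h2⟩ := exists_lt_of_lt_csSup' ha
    filter_upwards [h1] with n hn
    exact h2.trans hn
  · intro b hb'
    obtain ⟨t, h1, h2⟩ := exists_between hb'
    rcases h t (lt_of_le_of_lt zero_le h1) with h3 | h3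
    · exact absurd (le_csSup hb h3) (not_le.2 h1)
    · filter_upwards [h3] with n hn
      exact lt_of_le_of_lt (not_lt.1 hn) h2

section step
variable {d : ℕ} {e : Fin d → ℝ} {c w : ZLat d} {u : ZLat d → NNReal} {K : ℝ → ℝ → ℝ}

lemma stepR_adm (h : IsDir e c w) (hu : Admissible u) : Admissible (stepR e u) :=
  fun _ ht => (stepR_level h hu ht).2.1

lemma polSeq_tendsto (h : IsDir e c w) (hu : Admissible u) (x : ZLat d) :
    Tendsto (fun n => polSeq c w u n x) atTop (𝓝 (stepR e u x)) := by
  apply tendsto_of_levels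
  intro t ht
  obtain ⟨N, hN⟩ := (stepR_level h hu ht).1
  filter_upwards [eventually_ge_atTop N] with n hn
  have := Set.ext_iff.1 (hN n hn) x
  exact this

lemma polSeq_anti (hK : IsCost K) (h : IsDir e c w) :
    Antitone fun n => aEn Adj K (polSeq c w u n) :=
  antitone_nat_of_succ_le fun n => aEn_pol_le hK (h.good (kseq n)) _

lemma stepR_le_polSeq (hK : IsCost K) (h : IsDir e c w) (hu : Admissible u) (n : ℕ) :
    aEn Adj K (stepR e u) ≤ aEn Adj K (polSeq c w u n) := by
  apply aEn_limit hK (polSeq_tendsto h hu)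
  filter_upwards [eventually_ge_atTop n] with m hm
  exact polSeq_anti hK h hm

lemma stepR_le (hK : IsCost K) (h : IsDir e c w) (hu : Admissible u) :
    aEn Adj K (stepR e u) ≤ aEn Adj K u := stepR_le_polSeq hK h hu 0
end step

lemma isDir_of_mem {d : ℕ} {e : Fin d → ℝ} (h : e ∈ EvecList d) : ∃ c w, IsDir e c w := by
  unfold EvecList at h
  simp only [List.mem_append, List.mem_map, List.mem_flatMap, List.mem_filterMap, List.mem_finRange,
    true_and] at h
  rcases h with (⟨i, rfl⟩ | ⟨i, j, h⟩) | ⟨i, j, h⟩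
  · exact ⟨_, _, IsDir.ax i⟩
  · split_ifs at h with hij
    simp only [Option.some.injEq] at h
    subst h
    exact ⟨_, _, IsDir.pl i j hij⟩
  · split_ifs at h with hij
    simp only [Option.some.injEq] at h
    subst h
    exact ⟨_, _, IsDir.mi i j hij⟩

lemma mem_of_isDir {d : ℕ} {e : Fin d → ℝ} {c w : ZLat d} (h : IsDir e c w) : e ∈ EvecList d := by
  unfold EvecList
  simp only [List.mem_append, List.mem_map, List.mem_flatMap, List.mem_filterMap, List.mem_finRange,
    true_and]
  cases h with
  | ax i => exact Or.inl (Or.inl ⟨i, rfl⟩)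
  | pl i j h => exact Or.inl (Or.inr ⟨i, j, by simp [h]⟩)
  | mi i j h => exact Or.inr ⟨i, j, by simp [h]⟩

def itDir (d k : ℕ) : Fin d → ℝ := (EvecList d).getD (k % (EvecList d).length) 0

lemma length_pos' {d : ℕ} (hd : 2 ≤ d) : 0 < (EvecList d).length :=
  List.length_pos_of_mem (mem_of_isDir (IsDir.ax (⟨0, by omega⟩ : Fin d)))

lemma itDir_mem {d : ℕ} (hd : 2 ≤ d) (k : ℕ) : itDir d k ∈ EvecList d := by
  have := Nat.mod_lt k (length_pos' hd)
  unfold itDir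
  rw [List.getD_eq_getElem _ _ this]
  exact List.getElem_mem _

lemma itDir_often {d : ℕ} (hd : 2 ≤ d) {e : Fin d → ℝ} (he : e ∈ EvecList d) (N : ℕ) :
    ∃ n, N ≤ n ∧ itDir d n = e := by
  obtain ⟨i, hi, rfl⟩ := List.getElem_of_mem he
  have := length_pos' hd
  refine ⟨i + (EvecList d).length * N, by nlinarith, ?_⟩
  unfold itDir
  rw [Nat.add_mul_mod_self_left, Nat.mod_eq_of_lt hi, List.getD_eq_getElem _ _ hi]

section iter
variable {d : ℕ} {u : ZLat d → NNReal} {K : ℝ → ℝ → ℝ}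

lemma iterR_succ (n : ℕ) : iterR d u (n + 1) = stepR (itDir d n) (iterR d u n) := rfl

lemma iterR_adm (hd : 2 ≤ d) (hu : Admissible u) (n : ℕ) : Admissible (iterR d u n) := by
  induction n with
  | zero => exact hu
  | succ n ih =>
    obtain ⟨c, w, h⟩ := isDir_of_mem (itDir_mem hd n)
    rw [iterR_succ]
    exact stepR_adm h ih

lemma iterR_anti (hd : 2 ≤ d) (hK : IsCost K) (hu : Admissible u) :
    Antitone fun n => aEn Adj K (iterR d u n) :=
  antitone_nat_of_succ_le fun n => by
    obtain ⟨c, w, h⟩ := isDir_of_mem (itDir_mem hd n)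
    exact stepR_le hK h (iterR_adm hd hu n)

lemma iterR_level (hd : 2 ≤ d) (hu : Admissible u) {t : NNReal} (ht : 0 < t) :
    ∃ Ω : Set (ZLat d), (∀ᶠ n in atTop, {x | t < iterR d u n x} = Ω) ∧ Ω.Finite ∧
      Ω.ncard = {x | t < u x}.ncard ∧ ∀ e c w, IsDir e c w → Lower c w Ω := by
  have hdec : ∀ n, Dec {x | t < iterR d u n x} {x | t < iterR d u (n + 1) x} := fun n => by
    obtain ⟨c, w, h⟩ := isDir_of_mem (itDir_mem hd n)
    exact (stepR_level h (iterR_adm hd hu n) ht).2.2.1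
  have hcard : ∀ n, {x | t < iterR d u n x}.ncard = {x | t < u x}.ncard := by
    intro n
    induction n with
    | zero => rfl
    | succ n ih =>
      obtain ⟨c, w, h⟩ := isDir_of_mem (itDir_mem hd n)
      rw [← ih]
      exact (stepR_level h (iterR_adm hd hu n) ht).2.2.2.1
  obtain ⟨N, hN⟩ := stabilize hdec
  refine ⟨{x | t < iterR d u N x}, ?_, iterR_adm hd hu N t ht, hcard N, ?_⟩
  · filter_upwards [eventually_ge_atTop N] with n hn using hN n hn
  · intro e c w h
    obtain ⟨n, hn, he⟩ := itDir_often hd (mem_of_isDir h) N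
    rw [← hN (n + 1) (by omega), iterR_succ, he]
    exact (stepR_level h (iterR_adm hd hu n) ht).2.2.2.2

lemma RZd_tendsto (hd : 2 ≤ d) (hu : Admissible u) (x : ZLat d) :
    Tendsto (fun n => iterR d u n x) atTop (𝓝 (RZd d u x)) := by
  have hcard : ∀ t, 0 < t → ∀ n, {x | t < iterR d u n x}.ncard = {x | t < u x}.ncard := by
    intro t ht n
    induction n with
    | zero => rfl
    | succ n ih =>
      obtain ⟨c, w, h⟩ := isDir_of_mem (itDir_mem hd n)
      rw [← ih]
      exact (stepR_level h (iterR_adm hd hu n) ht).2.2.2.1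
  have hex : ∃ w, Tendsto (fun n => iterR d u n x) atTop (𝓝 w) := by
    obtain ⟨M, hM⟩ := adm_bdd hu
    refine lim_exists (M := M + 1) (fun n => ?_) (fun t ht => ?_)
    · have h1 := hcard (M + 1) (by positivity) n
      have h2 : {x | M + 1 < u x} = ∅ := by
        ext y
        simp only [Set.mem_setOf_eq, Set.mem_empty_iff_false, iff_false, not_lt]
        exact (hM y).trans (by simp)
      rw [h2, Set.ncard_empty, Set.ncard_eq_zero (iterR_adm hd hu n _ (by positivity))] at h1
      by_contra hc
      have : x ∈ {x | M + 1 < iterR d u n x} := not_le.1 hc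
      rw [h1] at this
      exact this
    · obtain ⟨Ω, h1, -⟩ := iterR_level hd hu ht
      by_cases hx : x ∈ Ω
      · left
        filter_upwards [h1] with n hn
        rw [← hn] at hx
        exact hx
      · right
        filter_upwards [h1] with n hn
        rw [← hn] at hx
        exact hx
  obtain ⟨w, hw⟩ := hex
  have : RZd d u x = w := hw.limUnder_eq
  rw [this]
  exact hw

lemma RZd_level (hd : 2 ≤ d) (hu : Admissible u) {t : NNReal} (ht : 0 < t) :
    ∃ Ω : Set (ZLat d), Ω.Finite ∧ Ω.ncard = {x | t < u x}.ncard ∧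
      (∀ e c w, IsDir e c w → Lower c w Ω) ∧ (∀ x, t < RZd d u x → x ∈ Ω) ∧
      ∀ x ∈ Ω, t ≤ RZd d u x := by
  obtain ⟨Ω, h1, h2, h3, h4⟩ := iterR_level hd hu ht
  refine ⟨Ω, h2, h3, h4, fun x hx => ?_, fun x hx => ?_⟩
  · have h5 := (RZd_tendsto hd hu x).eventually_const_lt hx
    obtain ⟨n, hn, hn'⟩ := (h1.and h5).exists
    rw [← hn]
    exact hn'
  · refine ge_of_tendsto (RZd_tendsto hd hu x) ?_
    filter_upwards [h1] with n hn
    rw [← hn] at hx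
    exact le_of_lt hx

lemma RZd_adm (hd : 2 ≤ d) (hu : Admissible u) : Admissible (RZd d u) := by
  intro t ht
  obtain ⟨Ω, h1, -, -, h4, -⟩ := RZd_level hd hu ht
  exact h1.subset h4

lemma RZd_le_iter (hd : 2 ≤ d) (hK : IsCost K) (hu : Admissible u) (n : ℕ) :
    aEn Adj K (RZd d u) ≤ aEn Adj K (iterR d u n) := by
  apply aEn_limit hK (RZd_tendsto hd hu)
  filter_upwards [eventually_ge_atTop n] with m hm
  exact iterR_anti hd hK hu hm

lemma RZd_le (hd : 2 ≤ d) (hK : IsCost K) (hu : Admissible u) :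
    aEn Adj K (RZd d u) ≤ aEn Adj K u := RZd_le_iter hd hK hu 0
end iter

lemma convex_abs_rpow {p : ℝ} (hp : 1 ≤ p) : ConvexOn ℝ Set.univ (fun x : ℝ => |x| ^ p) := by
  refine ⟨convex_univ, fun x _ y _ a b ha hb hab => ?_⟩
  have h1 : |a • x + b • y| ≤ a * |x| + b * |y| := by
    refine (abs_add_le _ _).trans ?_
    simp only [smul_eq_mul, abs_mul, abs_of_nonneg ha, abs_of_nonneg hb]
    exact le_rfl
  refine (Real.rpow_le_rpow (abs_nonneg _) h1 (by linarith)).trans ?_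
  exact (convexOn_rpow hp).2 (abs_nonneg x) (abs_nonneg y) ha hb hab

lemma strictConvex_abs_rpow {p : ℝ} (hp : 1 < p) :
    StrictConvexOn ℝ Set.univ (fun x : ℝ => |x| ^ p) := by
  refine ⟨convex_univ, fun x _ y _ hxy a b ha hb hab => ?_⟩
  have h1 : |a • x + b • y| ≤ a * |x| + b * |y| := by
    refine (abs_add_le _ _).trans ?_
    simp only [smul_eq_mul, abs_mul, abs_of_pos ha, abs_of_pos hb]
    exact le_rfl
  by_cases hne : |x| = |y|
  · have h2 : y = -x := by
      rcases abs_eq_abs.1 hne with h | h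
      · exact absurd h hxy
      · rw [h, neg_neg]
    have hx : x ≠ 0 := by
      rintro rfl
      apply hxy; rw [h2]; simp
    have hx' : 0 < |x| := abs_pos.2 hx
    have h3 : |a • x + b • y| < |x| := by
      rw [h2]
      have : a • x + b • -x = (a - b) * x := by simp only [smul_eq_mul]; ring
      rw [this, abs_mul]
      have : |a - b| < 1 := by rw [abs_lt]; constructor <;> linarith
      nlinarith
    have h4 := Real.rpow_lt_rpow (abs_nonneg _) h3 (by linarith : 0 < p)
    simp only [smul_eq_mul] at h4 ⊢
    rw [← hne, ← add_mul, hab, one_mul]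
    exact h4
  · refine (Real.rpow_le_rpow (abs_nonneg _) h1 (by linarith)).trans_lt ?_
    exact (strictConvexOn_rpow hp).2 (abs_nonneg x) (abs_nonneg y) hne ha hb hab

def phi (p a b : ℝ) : ℝ := |a - b| ^ p

lemma phi_sub {p : ℝ} (hp : 1 ≤ p) (a a' b b' : ℝ) (ha : a ≤ a') (hb : b ≤ b') :
    phi p a b + phi p a' b' ≤ phi p a b' + phi p a' b := by
  unfold phi
  rcases eq_or_lt_of_le (show a - b' ≤ a' - b by linarith) with h | h
  · have h1 : a = a' := by linarith
    have h2 : b = b' := by linarith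
    rw [h1, h2]
  · have hD : (a' - b) - (a - b') ≠ 0 := by linarith
    have hD' : 0 < (a' - b) - (a - b') := by linarith
    set θ := (b' - b) / ((a' - b) - (a - b')) with hθ
    have h0 : 0 ≤ θ := div_nonneg (by linarith) hD'.le
    have h1 : 0 ≤ 1 - θ := by
      rw [sub_nonneg, hθ, div_le_one hD']; linarith
    have hm : θ * ((a' - b) - (a - b')) = b' - b := by rw [hθ]; field_simp
    have k1 := (convex_abs_rpow hp).2 (Set.mem_univ (a - b')) (Set.mem_univ (a' - b)) h1 h0 (by ring)
    have k2 := (convex_abs_rpow hp).2 (Set.mem_univ (a - b')) (Set.mem_univ (a' - b)) h0 h1 (by ring)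
    have e1 : (1 - θ) • (a - b') + θ • (a' - b) = a - b := by
      simp only [smul_eq_mul]; linarith
    have e2 : θ • (a - b') + (1 - θ) • (a' - b) = a' - b' := by
      simp only [smul_eq_mul]; linarith
    rw [e1] at k1
    rw [e2] at k2
    simp only [smul_eq_mul] at k1 k2
    linarith

lemma phi_strict {p : ℝ} (hp : 1 < p) (a a' b b' : ℝ) (ha : a < a') (hb : b < b') :
    phi p a b + phi p a' b' < phi p a b' + phi p a' b := by
  unfold phi
  have hD : (a' - b) - (a - b') ≠ 0 := by linarith
  have hD' : 0 < (a' - b) - (a - b') := by linarith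
  set θ := (b' - b) / ((a' - b) - (a - b')) with hθ
  have h0 : 0 < θ := div_pos (by linarith) hD'
  have h1 : 0 < 1 - θ := by
    rw [sub_pos, hθ, div_lt_one hD']; linarith
  have hm : θ * ((a' - b) - (a - b')) = b' - b := by rw [hθ]; field_simp
  have hne : a - b' ≠ a' - b := by linarith
  have k1 := (strictConvex_abs_rpow hp).2 (Set.mem_univ (a - b')) (Set.mem_univ (a' - b)) hne h1 h0 (by ring)
  have k2 := (strictConvex_abs_rpow hp).2 (Set.mem_univ (a - b')) (Set.mem_univ (a' - b)) hne h0 h1 (by ring)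
  have e1 : (1 - θ) • (a - b') + θ • (a' - b) = a - b := by
    simp only [smul_eq_mul]; linarith
  have e2 : θ • (a - b') + (1 - θ) • (a' - b) = a' - b' := by
    simp only [smul_eq_mul]; linarith
  rw [e1] at k1
  rw [e2] at k2
  simp only [smul_eq_mul] at k1 k2
  linarith

lemma phi_cont {p : ℝ} (hp : 1 ≤ p) : Continuous fun z : ℝ × ℝ => phi p z.1 z.2 := by
  unfold phi
  exact (continuous_abs.comp (continuous_fst.sub continuous_snd)).rpow_const
    (fun _ => Or.inr (by linarith))

lemma phi_cost {p : ℝ} (hp : 1 ≤ p) : IsCost (phi p) :=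
  ⟨fun _ _ => Real.rpow_nonneg (abs_nonneg _) _, phi_sub hp, phi_cont hp⟩

lemma phi_comm (p a b : ℝ) : phi p a b = phi p b a := by
  unfold phi; rw [abs_sub_comm]

lemma latDist_comm' {d : ℕ} (x y : ZLat d) : latDist x y = latDist y x := by
  unfold latDist
  exact Finset.sum_congr rfl fun i _ => by omega

lemma adj_add {d : ℕ} (x : ZLat d) (i : Fin d) : Adj (x + latE i) x := by
  unfold Adj latDist
  simp only [Pi.add_apply, add_sub_cancel_left]
  rw [Finset.sum_eq_single i]
  · simp [latE_self]
  · intro j _ hj; simp [latE_ne hj]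
  · simp

lemma adj_symm {d : ℕ} {x y : ZLat d} (h : Adj x y) : Adj y x := by
  unfold Adj at *; rw [latDist_comm']; exact h

lemma adj_cases {d : ℕ} {x y : ZLat d} (h : Adj x y) : ∃ i, y = x + latE i ∨ x = y + latE i := by
  unfold Adj latDist at h
  have h1 : ∃ i ∈ Finset.univ, (x i - y i).natAbs ≠ 0 := Finset.exists_ne_zero_of_sum_ne_zero (by omega)
  obtain ⟨i, -, hi⟩ := h1
  rw [← Finset.add_sum_erase _ _ (Finset.mem_univ i)] at h
  have h2 : ∑ j ∈ Finset.univ.erase i, (x j - y j).natAbs = 0 := by omega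
  rw [Finset.sum_eq_zero_iff] at h2
  have h3 : ∀ j, j ≠ i → x j = y j := fun j hj => by
    have := h2 j (by simp [hj]); omega
  refine ⟨i, ?_⟩
  rcases (by omega : y i = x i + 1 ∨ x i = y i + 1) with h4 | h4
  · left
    ext j
    by_cases hj : j = i
    · subst hj; simp [latE_self, h4]
    · simp [latE_ne hj, h3 j hj]
  · right
    ext j
    by_cases hj : j = i
    · subst hj; simp [latE_self, h4]
    · simp [latE_ne hj, h3 j hj]

lemma latE_inj {d : ℕ} {i j : Fin d} (h : (latE i : ZLat d) = latE j) : i = j := by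
  by_contra hne
  have := congrFun h i
  rw [latE_self, latE_ne hne] at this
  exact one_ne_zero this

lemma latE_add_ne {d : ℕ} (x : ZLat d) (i j : Fin d) : x ≠ x + latE i + latE j := by
  intro h
  have := congrFun h i
  simp only [Pi.add_apply, latE_self] at this
  by_cases hj : i = j
  · subst hj; simp [latE_self] at this; omega
  · simp [latE_ne hj] at this

lemma eTerm_split {d : ℕ} (p : ℝ) (u : ZLat d → NNReal) (x y : ZLat d) :
    eTerm Adj (phi p) u x y =
      ∑ i, (if y = x + latE i then ENNReal.ofReal (phi p (u (x + latE i)) (u x)) else 0) +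
      ∑ i, (if x = y + latE i then ENNReal.ofReal (phi p (u (y + latE i)) (u y)) else 0) := by
  unfold eTerm
  split_ifs with h
  · obtain ⟨i, rfl | rfl⟩ := adj_cases h
    · rw [Finset.sum_eq_single i, if_pos rfl, Finset.sum_eq_zero, add_zero, phi_comm]
      · intro j _; rw [if_neg]; exact latE_add_ne _ _ _
      · intro j _ hj; rw [if_neg]; intro h; exact hj (latE_inj (add_left_cancel h)).symm
      · simp
    · rw [Finset.sum_eq_zero, Finset.sum_eq_single i, if_pos rfl, zero_add]
      · intro j _ hj; rw [if_neg]; intro h; exact hj (latE_inj (add_left_cancel h)).symm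
      · simp
      · intro j _; rw [if_neg]; exact latE_add_ne _ _ _
  · rw [Finset.sum_eq_zero, Finset.sum_eq_zero, add_zero]
    · intro i _; rw [if_neg]; rintro rfl; exact h (adj_add _ _)
    · intro i _; rw [if_neg]; rintro rfl; exact h (adj_symm (adj_add _ _))

lemma aEn_grad {d : ℕ} (p : ℝ) (u : ZLat d → NNReal) :
    aEn Adj (phi p) u = 2 * gradEnergy d p u := by
  have key : ∀ x : ZLat d, ∑' y : ZLat d, ∑ i, (if y = x + latE i then
      ENNReal.ofReal (phi p (u (x + latE i)) (u x)) else 0) =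
      ∑' i : Fin d, ENNReal.ofReal (phi p (u (x + latE i)) (u x)) := by
    intro x
    simp_rw [← tsum_fintype (L := .unconditional _)]
    rw [ENNReal.tsum_comm]
    refine tsum_congr fun i => ?_
    rw [tsum_ite_eq]
  unfold aEn
  rw [ENNReal.tsum_prod (f := fun x y => eTerm Adj (phi p) u x y)]
  simp_rw [eTerm_split, ENNReal.tsum_add]
  rw [two_mul]
  congr 1
  · unfold gradEnergy
    exact tsum_congr key
  · rw [ENNReal.tsum_comm]
    unfold gradEnergy
    exact tsum_congr key

lemma adm_of_sum {d : ℕ} {p : ℝ} (hp : 1 ≤ p) {u : ZLat d → NNReal}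
    (hu : (∑' x : ZLat d, (u x : ENNReal) ^ p) < ⊤) : Admissible u := by
  intro t ht
  have hp0 : 0 < p := by linarith
  have h1 : ((t : ENNReal) ^ p) ≠ 0 := by
    have : (0 : ENNReal) < (t : ENNReal) := by exact_mod_cast ht
    exact (ENNReal.rpow_pos this (by simp)).ne'
  refine (ENNReal.finite_const_le_of_tsum_ne_top hu.ne h1).subset fun x hx => ?_
  have : (t : ENNReal) ≤ u x := by exact_mod_cast (le_of_lt hx : t ≤ u x)
  exact ENNReal.rpow_le_rpow this hp0.le

lemma grad_fin {d : ℕ} {p : ℝ} (hp : 1 ≤ p) {u : ZLat d → NNReal}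
    (hu : (∑' x : ZLat d, (u x : ENNReal) ^ p) < ⊤) : aEn Adj (phi p) u ≠ ⊤ := by
  rw [aEn_grad]
  apply ENNReal.mul_ne_top (by simp)
  have hp0 : 0 < p := by linarith
  have hle : ∀ a b : NNReal, ENNReal.ofReal (|(a : ℝ) - b| ^ p) ≤ (a : ENNReal) ^ p + (b : ENNReal) ^ p := by
    intro a b
    have hm : |(a : ℝ) - b| ≤ ((max a b : NNReal) : ℝ) := by
      rw [abs_le, NNReal.coe_max]
      constructor
      · have := le_max_right (a : ℝ) b; have := a.2; have : (0:ℝ) ≤ a := a.2; linarith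
      · have := le_max_left (a : ℝ) b; have : (0:ℝ) ≤ b := b.2; linarith
    calc ENNReal.ofReal (|(a : ℝ) - b| ^ p) ≤ ENNReal.ofReal (((max a b : NNReal) : ℝ) ^ p) :=
          ENNReal.ofReal_le_ofReal (Real.rpow_le_rpow (abs_nonneg _) hm hp0.le)
      _ = ((max a b : NNReal) : ENNReal) ^ p := by
          rw [← ENNReal.ofReal_rpow_of_nonneg (NNReal.coe_nonneg _) hp0.le, ENNReal.ofReal_coe_nnreal]
      _ ≤ _ := by
          rcases max_choice a b with h | h <;> rw [h]
          · exact le_self_add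
          · exact le_add_self
  have : gradEnergy d p u ≤ ∑' (x : ZLat d) (i : Fin d), ((u (x + latE i) : ENNReal) ^ p + (u x : ENNReal) ^ p) :=
    ENNReal.tsum_le_tsum fun x => ENNReal.tsum_le_tsum fun i => hle _ _
  refine ne_top_of_le_ne_top ?_ this
  rw [ENNReal.tsum_comm, tsum_fintype]
  apply (ENNReal.sum_lt_top.2 _).ne
  intro i _
  rw [ENNReal.tsum_add]
  refine ENNReal.add_lt_top.2 ⟨?_, hu⟩
  have h2 := (Equiv.addRight (latE i)).tsum_eq (fun x : ZLat d => (u x : ENNReal) ^ p)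
  rw [← h2] at hu
  exact hu

lemma gradNorm_le {d : ℕ} {p : ℝ} (hp : 1 ≤ p) (u v : ZLat d → NNReal) :
    gradNorm d p u ≤ gradNorm d p v ↔ aEn Adj (phi p) u ≤ aEn Adj (phi p) v := by
  unfold gradNorm
  rw [ENNReal.rpow_le_rpow_iff (by positivity), aEn_grad, aEn_grad,
    ENNReal.mul_le_mul_iff_right (by simp) (by simp)]

lemma gradNorm_eq {d : ℕ} {p : ℝ} (hp : 1 ≤ p) (u v : ZLat d → NNReal) :
    gradNorm d p u = gradNorm d p v ↔ aEn Adj (phi p) u = aEn Adj (phi p) v := by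
  rw [le_antisymm_iff, le_antisymm_iff, gradNorm_le hp, gradNorm_le hp]

section
variable {d : ℕ} {e : Fin d → ℝ} {c w : ZLat d} {p : ℝ}

lemma lin_neg (c x : ZLat d) : lin (-c) x = - lin c x := by
  simp [lin]

lemma pol_inj (hp : 1 < p) (h : IsDir e c w) (k : ℤ) {v : ZLat d → NNReal}
    (hv : Function.Injective v) (hfin : aEn Adj (phi p) v ≠ ⊤)
    (heq : aEn Adj (phi p) (pol c w k v) = aEn Adj (phi p) v) :
    pol c w k v = v ∨ pol c w k v = fun x => v (rf c w k x) := by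
  have hg := h.good k
  have hconn : ∀ g : ZLat d → Prop,
      (∀ x y, (InH k (lin c x) ∧ rf c w k x ≠ x) → (InH k (lin c y) ∧ rf c w k y ≠ y) →
        Adj x y → g x → g y) →
      ∀ x y, (InH k (lin c x) ∧ rf c w k x ≠ x) → (InH k (lin c y) ∧ rf c w k y ≠ y) →
        g x → g y := by
    intro g hgg x y hx hy
    simp only [Ne, h.rf_fix, InH] at hgg hx hy
    by_cases hk : 1 ≤ k
    · refine conn c k g (fun x y hx hy => hgg x y (by omega) (by omega)) _ x y rfl (by omega) (by omega)
    · refine conn (-c) (-k) g (fun x y hx hy => ?_) _ x y rfl ?_ ?_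
      · rw [lin_neg] at hx hy
        exact hgg x y (by omega) (by omega)
      · rw [lin_neg]; omega
      · rw [lin_neg]; omega
  have hsign : ∀ x y, (InH k (lin c x) ∧ rf c w k x ≠ x) → (InH k (lin c y) ∧ rf c w k y ≠ y) →
      v x < v (rf c w k x) → v y < v (rf c w k y) := by
    refine hconn (fun x => v x < v (rf c w k x)) (fun x y hx hy hA h1 => ?_)
    have h2 := pol_eq_sign (phi_cost hp.le) (phi_strict hp) hg v hfin heq adj_irrefl x y
      hx.1 hy.1 hx.2 hy.2 hA h1
    exact lt_of_le_of_ne h2 fun h3 => hy.2 (hv h3).symm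
  by_cases hex : ∃ x, (InH k (lin c x) ∧ rf c w k x ≠ x) ∧ v x < v (rf c w k x)
  · right
    obtain ⟨x, hx, hlt⟩ := hex
    funext y
    by_cases hy : InH k (lin c y)
    · have := aPol_H hg v hy
      refine this.trans ?_
      by_cases hf : rf c w k y = y
      · rw [hf, max_self]
      · exact max_eq_right (hsign x y hx ⟨hy, hf⟩ hlt).le
    · have hsy := hg.total y hy
      have h1 := aPol_sH hg v hsy
      rw [h.rf_rf] at h1
      refine h1.trans ?_
      by_cases hf : rf c w k (rf c w k y) = rf c w k y
      · rw [h.rf_rf] at hf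
        rw [← hf, min_self]
      · have := hsign x _ hx ⟨hsy, hf⟩ hlt
        rw [h.rf_rf] at this
        exact min_eq_left this.le
  · left
    push Not at hex
    funext y
    by_cases hy : InH k (lin c y)
    · have := aPol_H hg v hy
      refine this.trans ?_
      by_cases hf : rf c w k y = y
      · rw [hf, max_self]
      · exact max_eq_left (hex y ⟨hy, hf⟩)
    · have hsy := hg.total y hy
      have h1 := aPol_sH hg v hsy
      rw [h.rf_rf] at h1
      refine h1.trans ?_
      by_cases hf : rf c w k (rf c w k y) = rf c w k y
      · rw [h.rf_rf] at hf
        rw [← hf, min_self]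
      · have := hex _ ⟨hsy, hf⟩
        rw [h.rf_rf] at this
        exact min_eq_right this

/-- `w` is a symmetric copy of `u` -/
def SymOf (u w : ZLat d → NNReal) : Prop :=
  ∃ τ : ZLat d ≃ ZLat d, AffSP (fun x => τ x) ∧ w = fun x => u (τ x)

lemma SymOf.refl (u : ZLat d → NNReal) : SymOf u u := ⟨Equiv.refl _, AffSP.id, rfl⟩

lemma SymOf.trans {u v w : ZLat d → NNReal} (h : SymOf u v) (h' : SymOf v w) : SymOf u w := by
  obtain ⟨τ, h1, rfl⟩ := h
  obtain ⟨τ', h2, rfl⟩ := h'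
  exact ⟨τ'.trans τ, h1.comp h2, rfl⟩

lemma SymOf.en {u v : ZLat d → NNReal} (h : SymOf u v) (K : ℝ → ℝ → ℝ) :
    aEn Adj K v = aEn Adj K u := by
  obtain ⟨τ, h1, rfl⟩ := h
  exact aEn_comp τ (fun x y => by unfold Adj; rw [h1.dist x y]) u

lemma SymOf.inj {u v : ZLat d → NNReal} (h : SymOf u v) (hu : Function.Injective u) :
    Function.Injective v := by
  obtain ⟨τ, h1, rfl⟩ := h
  exact hu.comp τ.injective

lemma symOf_rf (h : IsDir e c w) (k : ℤ) (v : ZLat d → NNReal) :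
    SymOf v (fun x => v (rf c w k x)) :=
  ⟨⟨rf c w k, rf c w k, h.rf_rf k, h.rf_rf k⟩, h.affSP k, rfl⟩

lemma symOf_limit {u W : ZLat d → NNReal} {v : ℕ → ZLat d → NNReal} (hu : Admissible u)
    (hs : ∀ n, SymOf u (v n)) (hv : ∀ x, Tendsto (fun n => v n x) atTop (𝓝 (W x)))
    {b : ZLat d} (hb : 0 < W b) : SymOf u W := by
  choose τ hτ hvτ using hs
  have hF := hu (W b / 2) (half_pos hb)
  set F := {x | W b / 2 < u x} with hFdef
  have hev : ∀ᶠ n in atTop, W b / 2 < v n b := (hv b).eventually_const_lt (NNReal.half_lt_self hb.ne')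
  obtain ⟨N, hN⟩ := eventually_atTop.1 hev
  choose π s hπ using hτ
  have hmem : ∀ m, τ (N + m) b ∈ F := fun m => by
    have := hN (N + m) (Nat.le_add_right _ _)
    rw [hvτ] at this
    exact this
  have : Finite F := hF
  let data : ℕ → Equiv.Perm (Fin d) × (Fin d → ℤˣ) × F := fun m =>
    (π (N + m), s (N + m), ⟨τ (N + m) b, hmem m⟩)
  obtain ⟨y, hy⟩ := Finite.exists_infinite_fiber data
  have hinf : (data ⁻¹' {y}).Infinite := Set.infinite_coe_iff.1 hy
  obtain ⟨m0, hm0⟩ := hinf.nonempty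
  have hsame : ∀ m ∈ data ⁻¹' {y}, ∀ x, τ (N + m) x = τ (N + m0) x := by
    intro m hm x
    have h1 : data m = data m0 := by
      rw [Set.mem_preimage, Set.mem_singleton_iff] at hm hm0
      rw [hm, hm0]
    simp only [data, Prod.mk.injEq, Subtype.mk.injEq] at h1
    obtain ⟨a1, a2, a3⟩ := h1
    ext i
    have k1 := hπ (N + m) x i
    have k2 := hπ (N + m) b i
    have k3 := hπ (N + m0) x i
    have k4 := hπ (N + m0) b i
    simp only at k1 k2 k3 k4
    rw [a1, a2] at k1 k2
    rw [a3] at k2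
    omega
  refine ⟨τ (N + m0), ⟨π (N + m0), s (N + m0), hπ (N + m0)⟩, ?_⟩
  funext x
  have hv' : Tendsto (fun m => v (N + m) x) atTop (𝓝 (W x)) := by
    have := (hv x).comp (tendsto_add_atTop_nat N)
    refine this.congr fun m => ?_
    simp [add_comm]
  refine tendsto_nhds_unique_of_frequently_eq hv' tendsto_const_nhds ?_
  refine (Nat.frequently_atTop_iff_infinite.2 hinf).mono fun m hm => ?_
  rw [hvτ]
  simp only
  rw [hsame m hm x]

lemma aEn_pos_ex (hp : 1 < p) {W : ZLat d → NNReal} (h : aEn Adj (phi p) W ≠ 0) : ∃ b, 0 < W b := by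
  by_contra hc
  push Not at hc
  apply h
  unfold aEn
  rw [ENNReal.tsum_eq_zero]
  intro z
  have h1 : W z.1 = 0 := le_antisymm (hc _) zero_le
  have h2 : W z.2 = 0 := le_antisymm (hc _) zero_le
  unfold eTerm phi
  rw [h1, h2]
  simp [Real.zero_rpow (by linarith : p ≠ 0)]

lemma aEn_ne_zero (hd : 2 ≤ d) {v : ZLat d → NNReal} (hv : Function.Injective v) :
    aEn Adj (phi p) v ≠ 0 := by
  unfold aEn
  intro h
  rw [ENNReal.tsum_eq_zero] at h
  let i : Fin d := ⟨0, by omega⟩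
  have h1 := h (0 + latE i, 0)
  unfold eTerm at h1
  rw [if_pos (adj_add 0 i), ENNReal.ofReal_eq_zero] at h1
  have hne : (v (0 + latE i) : ℝ) - v 0 ≠ 0 := by
    intro h2
    have h3 : v (0 + latE i) = v 0 := by
      apply NNReal.coe_injective; linarith
    have h4 := congrFun (hv h3) i
    simp [latE_self] at h4
  have : 0 < phi p (v (0 + latE i)) (v 0) := Real.rpow_pos_of_pos (abs_pos.2 hne) _
  simp only at h1
  linarith

lemma symOf_step (hd : 2 ≤ d) (hp : 1 < p) (h : IsDir e c w) {v : ZLat d → NNReal}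
    (hadm : Admissible v) (hv : Function.Injective v) (hfin : aEn Adj (phi p) v ≠ ⊤)
    (heq : aEn Adj (phi p) (stepR e v) = aEn Adj (phi p) v) : SymOf v (stepR e v) := by
  have hen : ∀ n, aEn Adj (phi p) (polSeq c w v n) = aEn Adj (phi p) v := fun n => by
    have h0 := polSeq_anti (u := v) (phi_cost hp.le) h (Nat.zero_le n)
    exact le_antisymm h0
      (heq.symm.le.trans (stepR_le_polSeq (phi_cost hp.le) h hadm n))
  have hs : ∀ n, SymOf v (polSeq c w v n) := by
    intro n
    induction n with
    | zero => exact SymOf.refl v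
    | succ n ih =>
      rcases pol_inj hp h (kseq n) (ih.inj hv) (by rw [hen]; exact hfin)
        ((hen (n + 1)).trans (hen n).symm) with h1 | h1
      · change SymOf v (pol c w (kseq n) (polSeq c w v n))
        rw [h1]; exact ih
      · change SymOf v (pol c w (kseq n) (polSeq c w v n))
        rw [h1]; exact ih.trans (symOf_rf h _ _)
  obtain ⟨b, hb⟩ := aEn_pos_ex (W := stepR e v) hp (by rw [heq]; exact aEn_ne_zero hd hv)
  exact symOf_limit hadm hs (polSeq_tendsto h hadm) hb

lemma symOf_RZd (hd : 2 ≤ d) (hp : 1 < p) {u : ZLat d → NNReal}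
    (hadm : Admissible u) (hu : Function.Injective u) (hfin : aEn Adj (phi p) u ≠ ⊤)
    (heq : aEn Adj (phi p) (RZd d u) = aEn Adj (phi p) u) : SymOf u (RZd d u) := by
  have hen : ∀ n, aEn Adj (phi p) (iterR d u n) = aEn Adj (phi p) u := fun n => by
    have h0 := iterR_anti (u := u) hd (phi_cost hp.le) hadm (Nat.zero_le n)
    exact le_antisymm h0
      (heq.symm.le.trans (RZd_le_iter hd (phi_cost hp.le) hadm n))
  have hs : ∀ n, SymOf u (iterR d u n) := by
    intro n
    induction n with
    | zero => exact SymOf.refl u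
    | succ n ih =>
      obtain ⟨c, w, h⟩ := isDir_of_mem (itDir_mem hd n)
      refine ih.trans (symOf_step hd hp h (iterR_adm hd hadm n) (ih.inj hu) (by rw [hen]; exact hfin) ?_)
      exact (hen (n + 1)).trans (hen n).symm
  obtain ⟨b, hb⟩ := aEn_pos_ex (W := RZd d u) hp (by rw [heq]; exact aEn_ne_zero hd hu)
  exact symOf_limit hadm hs (RZd_tendsto hd hadm) hb

lemma auto_of_symOf {u v : ZLat d → NNReal} (h : SymOf u v) :
    ∃ σ : ZLat d ≃ ZLat d, IsLatAuto σ ∧ u = fun x => v (σ x) := by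
  obtain ⟨τ, h1, rfl⟩ := h
  refine ⟨τ.symm, fun x y => ?_, by simp⟩
  rw [← h1.dist]
  simp
end

section
variable {d : ℕ}

def AllLower (Ω : Set (ZLat d)) : Prop := ∀ e c w, IsDir e c w → Lower c w Ω

lemma posIdx_abs {m m' : ℤ} (h : |m'| < |m|) : posIdx m' ≤ posIdx m := by
  unfold posIdx
  split_ifs <;> grind

lemma AllLower.ax {Ω : Set (ZLat d)} (h : AllLower Ω) {y : ZLat d} (hy : y ∈ Ω) (i : Fin d) {m : ℤ}
    (hm : posIdx (2 * m) ≤ posIdx (2 * y i)) : Function.update y i m ∈ Ω := by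
  have h1 := h _ _ _ (IsDir.ax i) y hy (m - y i)
  have he : y + (m - y i) • latE i = Function.update y i m := by
    ext j
    by_cases hj : j = i
    · subst hj; simp [latE_self]
    · simp [latE_ne hj, hj]
  rw [he] at h1
  apply h1
  rw [lin_comm, lin_smul, lin_latE, lin_comm, lin_smul, lin_latE, Function.update_self]
  exact hm

lemma AllLower.mi {Ω : Set (ZLat d)} (h : AllLower Ω) {y : ZLat d} (hy : y ∈ Ω) {i j : Fin d}
    (hij : i ≠ j) (s : ℤ) (hs : |y i - y j + 2 * s| < |y i - y j|) :
    y + s • (latE i - latE j) ∈ Ω := by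
  have h1 : ∀ a b : Fin d, lin (latE a - latE b) y = y a - y b := fun a b => by
    rw [lin_comm, lin_sub, lin_latE, lin_latE]
  rcases lt_or_gt_of_ne hij with hlt | hlt
  · apply h _ _ _ (IsDir.mi i j hlt) y hy
    apply posIdx_abs
    rw [lin_add, lin_smul, (IsDir.mi i j hlt).lin_w, h1]
    rw [mul_comm]; exact hs
  · have he : y + s • (latE i - latE j) = y + (-s) • (latE j - latE i) := by
      rw [neg_smul, ← smul_neg, neg_sub]
    rw [he]
    apply h _ _ _ (IsDir.mi j i hlt) y hy
    apply posIdx_abs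
    rw [lin_add, lin_smul, (IsDir.mi j i hlt).lin_w, h1]
    rw [← abs_neg, abs_sub_comm]
    convert hs using 2; ring

lemma AllLower.pl {Ω : Set (ZLat d)} (h : AllLower Ω) {y : ZLat d} (hy : y ∈ Ω) {i j : Fin d}
    (hij : i ≠ j) (s : ℤ) (hs : |y i + y j + 2 * s| < |y i + y j|) :
    y + s • (latE i + latE j) ∈ Ω := by
  have h1 : ∀ a b : Fin d, lin (latE a + latE b) y = y a + y b := fun a b => by
    rw [lin_comm, lin_add, lin_latE, lin_latE]
  rcases lt_or_gt_of_ne hij with hlt | hlt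
  · apply h _ _ _ (IsDir.pl i j hlt) y hy
    apply posIdx_abs
    rw [lin_add, lin_smul, (IsDir.pl i j hlt).lin_w, h1]
    rw [mul_comm]; exact hs
  · rw [add_comm (latE i) (latE j)]
    apply h _ _ _ (IsDir.pl j i hlt) y hy
    apply posIdx_abs
    rw [lin_add, lin_smul, (IsDir.pl j i hlt).lin_w, h1]
    rw [mul_comm, add_comm (y j)]; exact hs

lemma AllLower.mem {Ω : Set (ZLat d)} (h : AllLower Ω) {x y : ZLat d} (hy : y ∈ Ω) (i : Fin d)
    (hi : ∑ j, |x j| < |y i|) : x ∈ Ω := by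
  classical
  -- kill the other coordinates
  have step1 : ∀ T : Finset (Fin d), i ∉ T → (fun j => if j ∈ T then 0 else y j) ∈ Ω := by
    intro T
    induction T using Finset.induction_on with
    | empty => intro _; simpa using hy
    | insert a T ha ih =>
      intro hiT
      have h1 := ih (fun h => hiT (Finset.mem_insert_of_mem h))
      have h2 := h.ax h1 a (m := 0) (by
        by_cases h0 : y a = 0
        · simp [h0]
        · apply posIdx_abs
          simp [ha, h0])
      convert h2 using 1
      ext j
      by_cases hj : j = a
      · subst hj; simp
      · simp [hj]
  have hsum0 : 0 ≤ ∑ j, |x j| := Finset.sum_nonneg fun _ _ => abs_nonneg _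
  set Y := |y i| with hY
  have step2 : (fun j => if j = i then Y else 0) ∈ Ω := by
    have h1 := step1 (Finset.univ.erase i) (by simp)
    have h2 := h.ax h1 i (m := Y) (by
      simp only [Finset.mem_erase, ne_eq, not_true_eq_false, false_and, if_false]
      unfold posIdx
      rw [hY]
      split_ifs <;> grind)
    convert h2 using 1
    ext j
    by_cases hj : j = i
    · subst hj; simp
    · simp [hj]
  have step3 : ∀ T : Finset (Fin d), i ∉ T →
      (fun j => if j = i then Y - ∑ l ∈ T, |x l| else if j ∈ T then x j else 0) ∈ Ω := by
    intro T
    induction T using Finset.induction_on with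
    | empty => intro _; simpa using step2
    | insert a T ha ih =>
      intro hiT
      have h1 := ih (fun h => hiT (Finset.mem_insert_of_mem h))
      have hai : a ≠ i := fun h => hiT (by simp [h])
      have hle : |x a| + ∑ l ∈ T, |x l| ≤ ∑ j, |x j| := by
        rw [← Finset.sum_insert (f := fun l => |x l|) ha]
        exact Finset.sum_le_sum_of_subset_of_nonneg (Finset.subset_univ _) fun _ _ _ => abs_nonneg _
      rw [Finset.sum_insert ha]
      set A := Y - ∑ l ∈ T, |x l| with hA
      have hAx : |x a| < A := by omega
      rcases lt_trichotomy (x a) 0 with h0 | h0 | h0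
      · have h2 := h.pl h1 hai.symm (x a) (by
          simp only [if_true, hai, if_false, ha]
          grind)
        convert h2 using 1
        ext j
        by_cases hj : j = i
        · subst hj; simp [latE_self, latE_ne hai.symm]; grind
        · by_cases hja : j = a
          · subst hja; simp [latE_self, latE_ne hai, hai, ha]
          · simp [latE_ne hj, latE_ne hja, hj, hja]
      · convert h1 using 1
        ext j
        by_cases hj : j = i
        · subst hj; simp [h0]; omega
        · by_cases hja : j = a
          · subst hja; simp [hai, ha, h0]
          · simp [hj, hja]
      · have h2 := h.mi h1 hai.symm (-x a) (by
          simp only [if_true, hai, if_false, ha]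
          grind)
        convert h2 using 1
        ext j
        by_cases hj : j = i
        · subst hj; simp [latE_self, latE_ne hai.symm]; grind
        · by_cases hja : j = a
          · subst hja; simp [latE_self, latE_ne hai, hai, ha]
          · simp [latE_ne hj, latE_ne hja, hj, hja]
  have h3 := step3 (Finset.univ.erase i) (by simp)
  have hs := Finset.add_sum_erase Finset.univ (fun j => |x j|) (Finset.mem_univ i)
  have h4 := h.ax h3 i (m := x i) (by
    apply posIdx_abs
    simp only [if_true]
    grind)
  convert h4 using 1
  ext j
  by_cases hj : j = i
  · subst hj; simp
  · simp [hj]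

lemma strict_many {α : Type*} {u : α → NNReal} (hadm : Admissible u) (hs : StrictRan u) (n : ℕ) :
    ∃ t, 0 < t ∧ n < {x | t < u x}.ncard := by
  refine ⟨nthLargest u (n + 2), ?_, ?_⟩
  · exact lt_of_le_of_lt zero_le (hs (n + 2) (by omega))
  · have h1 := hs (n + 1) (by omega)
    exact (lt_nthLargest hadm (by omega) (lt_of_le_of_lt zero_le (hs (n + 2) (by omega)))).1 h1

lemma RZd_pos (hd : 2 ≤ d) {u : ZLat d → NNReal} (hadm : Admissible u) (hs : StrictRan u)
    (x : ZLat d) : 0 < RZd d u x := by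
  set B : Set (ZLat d) := {y | ∀ i, |y i| ≤ ∑ j, |x j|} with hB
  have hfin : B.Finite := by
    have : (Set.Icc (fun _ => -∑ j, |x j|) (fun _ => ∑ j, |x j|) : Set (ZLat d)).Finite :=
      Set.finite_Icc _ _
    refine this.subset fun y hy => ⟨fun i => (abs_le.1 (hy i)).1, fun i => (abs_le.1 (hy i)).2⟩
  obtain ⟨t, ht, hn⟩ := strict_many hadm hs B.ncard
  obtain ⟨Ω, h1, h2, h3, h4, h5⟩ := RZd_level hd hadm ht
  have hex : ¬ Ω ⊆ B := fun h => by
    have := Set.ncard_le_ncard h hfin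
    omega
  obtain ⟨y, hy, hyB⟩ := Set.not_subset.1 hex
  simp only [hB, Set.mem_setOf_eq, not_forall, not_le] at hyB
  obtain ⟨i, hi⟩ := hyB
  exact lt_of_lt_of_le ht (h5 x (AllLower.mem h3 hy i hi))

lemma inj_of_strict {α : Type*} {u : α → NNReal} (hadm : Admissible u) (hs : StrictRan u)
    (hpos : ∀ x, 0 < u x) : Function.Injective u := by
  intro x y hxy
  by_contra hne
  set t := u x with ht
  have ht0 : 0 < t := hpos x
  have hf : {z | t ≤ u z}.Finite := (hadm (t / 2) (half_pos ht0)).subset fun z hz =>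
    lt_of_lt_of_le (NNReal.half_lt_self ht0.ne') hz
  set n := {z | t ≤ u z}.ncard with hn
  have hlt : {z | t < u z}.ncard + 2 ≤ n := by
    have hsub : {z | t < u z} ∪ {x, y} ⊆ {z | t ≤ u z} := by
      rintro z (hz | rfl | rfl)
      · have hz' : t < u z := hz
        exact hz'.le
      · exact le_of_eq ht
      · exact le_of_eq hxy
    have h1 := Set.ncard_le_ncard hsub hf
    rw [Set.ncard_union_eq _ (hadm t ht0) (by simp), Set.ncard_pair hne] at h1
    · exact h1
    · rw [Set.disjoint_right]
      rintro z (rfl | rfl)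
      · simp [ht]
      · simp [hxy]
  have h1 : t ≤ nthLargest u n := by
    refine le_csSup (nth_bdd hadm (by omega)) ⟨hf.toFinset, ?_, ?_⟩
    · rw [hn, Set.ncard_eq_toFinset_card _ hf]
    · intro z hz; simpa using hz
  have h2 := hs (n - 1) (by omega)
  rw [Nat.sub_add_cancel (by omega)] at h2
  have h3 := (lt_nthLargest hadm (by omega) ht0).1 (lt_of_le_of_lt h1 h2)
  omega
end

/-- mixed difference -/
def mixQ (p a a' b b' : ℝ) : ℝ := phi p a b' + phi p a' b - phi p a b - phi p a' b'

lemma mixQ_nonneg {p : ℝ} (hp : 1 ≤ p) {a a' b b' : ℝ} (ha : a ≤ a') (hb : b ≤ b') :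
    0 ≤ mixQ p a a' b b' := by
  have := phi_sub hp a a' b b' ha hb
  unfold mixQ; linarith

lemma mixQ_min {p : ℝ} (hp : 1 ≤ p) {a a' b b' : ℝ} (s : ℝ) (ha : a ≤ a') (hb : b ≤ b') :
    mixQ p (min a s) (min a' s) b b' ≤ mixQ p a a' b b' := by
  rcases le_total a' s with h1 | h1
  · rw [min_eq_left h1, min_eq_left (ha.trans h1)]
  · rw [min_eq_right h1]
    rcases le_total a s with h2 | h2
    · rw [min_eq_left h2]
      have := mixQ_nonneg hp h1 hb
      unfold mixQ at *; linarith
    · rw [min_eq_right h2]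
      have := mixQ_nonneg hp ha hb
      unfold mixQ at *; linarith

lemma mixQ_max {p : ℝ} (hp : 1 ≤ p) {a a' b b' : ℝ} (t : ℝ) (ha : a ≤ a') (hb : b ≤ b') :
    mixQ p a a' (max t b) (max t b') ≤ mixQ p a a' b b' := by
  rcases le_total t b with h1 | h1
  · rw [max_eq_right h1, max_eq_right (h1.trans hb)]
  · rw [max_eq_left h1]
    rcases le_total t b' with h2 | h2
    · rw [max_eq_right h2]
      have := mixQ_nonneg hp ha h1
      unfold mixQ at *; linarith
    · rw [max_eq_left h2]
      have := mixQ_nonneg hp ha hb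
      unfold mixQ at *; linarith

/-- correction cost -/
def corr (p s t a b : ℝ) : ℝ := mixQ p (min a s) s t (max t b)

lemma corr_nonneg {p : ℝ} (hp : 1 ≤ p) (s t a b : ℝ) : 0 ≤ corr p s t a b :=
  mixQ_nonneg hp (min_le_right _ _) (le_max_left _ _)

lemma corr_zero_left (p : ℝ) {s t a b : ℝ} (h : s ≤ a) : corr p s t a b = 0 := by
  unfold corr mixQ; rw [min_eq_right h]; ring

lemma corr_zero_right (p : ℝ) {s t a b : ℝ} (h : b ≤ t) : corr p s t a b = 0 := by
  unfold corr mixQ; rw [max_eq_left h]; ring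

lemma corr_mix {p : ℝ} (hp : 1 ≤ p) (s t : ℝ) {a a' b b' : ℝ} (ha : a ≤ a') (hb : b ≤ b') :
    corr p s t a b' + corr p s t a' b - corr p s t a b - corr p s t a' b' ≤ mixQ p a a' b b' := by
  have h1 := mixQ_min hp s ha (max_le_max_left t hb)
  have h2 := mixQ_max hp t ha hb
  have h3 : corr p s t a b' + corr p s t a' b - corr p s t a b - corr p s t a' b' =
      mixQ p (min a s) (min a' s) (max t b) (max t b') := by
    unfold corr mixQ; ring
  linarith

def corrK (p s t a b : ℝ) : ℝ := phi p a b - (corr p s t a b + corr p s t b a) / 2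

lemma corr_cont {p : ℝ} (hp : 1 ≤ p) (s t : ℝ) : Continuous fun z : ℝ × ℝ => corr p s t z.1 z.2 := by
  have hc := phi_cont hp
  have h1 : Continuous fun z : ℝ × ℝ => min z.1 s := continuous_fst.min continuous_const
  have h2 : Continuous fun z : ℝ × ℝ => max t z.2 := continuous_const.max continuous_snd
  have key : ∀ f g : ℝ × ℝ → ℝ, Continuous f → Continuous g →
      Continuous fun z => phi p (f z) (g z) := fun f g hf hg => hc.comp (hf.prodMk hg)
  unfold corr mixQ
  exact (((key _ _ h1 h2).add (key _ _ continuous_const continuous_const)).sub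
    (key _ _ h1 continuous_const)).sub (key _ _ continuous_const h2)

lemma corrK_cost {p : ℝ} (hp : 1 ≤ p) {s t : ℝ} (hst : s ≤ t) : IsCost (corrK p s t) := by
  have hsub : ∀ a a' b b', a ≤ a' → b ≤ b' →
      corrK p s t a b + corrK p s t a' b' ≤ corrK p s t a b' + corrK p s t a' b := by
    intro a a' b b' ha hb
    have h1 := corr_mix hp s t ha hb
    have h2 := corr_mix hp s t hb ha
    have h3 : mixQ p b b' a a' = mixQ p a a' b b' := by
      unfold mixQ
      rw [phi_comm p b a', phi_comm p b' a, phi_comm p b a, phi_comm p b' a']; ring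
    rw [h3] at h2
    unfold corrK
    unfold mixQ at h1 h2
    linarith
  have hdiag : ∀ a, corrK p s t a a = 0 := by
    intro a
    have h0 : corr p s t a a = 0 := by
      rcases le_total s a with h | h
      · exact corr_zero_left p h
      · exact corr_zero_right p (h.trans hst)
    unfold corrK
    rw [h0]
    unfold phi
    rw [sub_self, abs_zero, Real.zero_rpow (by linarith)]
    ring
  have hsymm : ∀ a b, corrK p s t a b = corrK p s t b a := by
    intro a b
    unfold corrK
    rw [phi_comm, add_comm]
  refine ⟨fun a b => ?_, hsub, ?_⟩
  · rcases le_total a b with h | h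
    · have := hsub a b a b h h
      rw [hdiag, hdiag, hsymm b a] at this
      linarith
    · have := hsub b a b a h h
      rw [hdiag, hdiag, hsymm b a] at this
      linarith
  · unfold corrK
    have h1 := corr_cont hp s t
    exact (phi_cont hp).sub ((h1.add (h1.comp continuous_swap)).div_const 2)

lemma nbr_finite {d : ℕ} (y : ZLat d) : {x | Adj x y}.Finite := by
  refine ((Set.finite_range fun i : Fin d => y + latE i).union
    (Set.finite_range fun i : Fin d => y - latE i)).subset fun x hx => ?_
  obtain ⟨i, h | h⟩ := adj_cases hx
  · exact Or.inr ⟨i, by rw [h]; simp⟩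
  · exact Or.inl ⟨i, h.symm⟩

lemma u_pos {d : ℕ} (hd : 2 ≤ d) {p : ℝ} (hp : 1 < p) {u : ZLat d → NNReal}
    (hadm : Admissible u) (hs : StrictRan u) (hfin : aEn Adj (phi p) u ≠ ⊤)
    (heq : aEn Adj (phi p) (RZd d u) = aEn Adj (phi p) u) : ∀ x, 0 < u x := by
  by_contra hcon
  push Not at hcon
  obtain ⟨z, hz⟩ := hcon
  have hz0 : u z = 0 := le_antisymm hz zero_le
  -- an edge between a zero and a positive point
  have hedge : ∃ x y, Adj x y ∧ u x = 0 ∧ 0 < u y := by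
    by_contra hc
    push Not at hc
    obtain ⟨t, ht, hn⟩ := strict_many hadm hs 0
    obtain ⟨y, hy⟩ := Set.nonempty_of_ncard_ne_zero (by omega : {x | t < u x}.ncard ≠ 0)
    have hl : ∀ x : ZLat d, lin 0 x < 1 := fun x => by simp [lin]
    have := conn 0 1 (fun x => u x = 0)
      (fun x y _ _ hA hx => le_antisymm (hc x y hA hx) zero_le) _ z y rfl (hl z) (hl y) hz0
    simp only [Set.mem_setOf_eq] at hy
    rw [this] at hy
    exact absurd hy (not_lt.2 zero_le)
  obtain ⟨x0, y0, hA0, hx0, hy0⟩ := hedge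
  set t1 := u y0 / 2 with ht1
  have ht1pos : 0 < t1 := half_pos hy0
  have ht1lt : t1 < u y0 := NNReal.half_lt_self hy0.ne'
  set N : Set (ZLat d) := ⋃ y ∈ {y | t1 < RZd d u y}, {x | Adj x y} with hN
  have hNfin : N.Finite := (RZd_adm hd hadm t1 ht1pos).biUnion fun y _ => nbr_finite y
  obtain ⟨s1, hs1, hmin⟩ := Set.exists_min_image (insert t1 (RZd d u '' N)) id
    ((hNfin.image _).insert t1) (Set.insert_nonempty _ _)
  have hs1pos : 0 < s1 := by
    rcases hs1 with rfl | ⟨x, _, rfl⟩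
    · exact ht1pos
    · exact RZd_pos hd hadm hs x
  have hs1t : s1 ≤ t1 := hmin t1 (Set.mem_insert _ _)
  have hs1N : ∀ x y, Adj x y → t1 < RZd d u y → s1 ≤ RZd d u x := fun x y hA hy =>
    hmin _ (Set.mem_insert_of_mem _ ⟨x, Set.mem_biUnion (show y ∈ {y | t1 < RZd d u y} from hy) hA, rfl⟩)
  have hcorr0 : ∀ x y, Adj x y → corr p s1 t1 (RZd d u x) (RZd d u y) = 0 := by
    intro x y hA
    rcases le_or_gt (RZd d u y) t1 with h | h
    · exact corr_zero_right p (by exact_mod_cast h)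
    · exact corr_zero_left p (by exact_mod_cast hs1N x y hA h)
  have hcost := corrK_cost (p := p) hp.le (s := s1) (t := t1) (by exact_mod_cast hs1t)
  have h1 : aEn Adj (corrK p s1 t1) (RZd d u) = aEn Adj (phi p) (RZd d u) := by
    unfold aEn
    refine tsum_congr fun z => ?_
    unfold eTerm
    split_ifs with hA
    · unfold corrK
      rw [hcorr0 _ _ hA, hcorr0 _ _ (adj_symm hA)]
      simp
    · rfl
  have h2 := RZd_le hd hcost hadm
  have hle : ∀ a b, corrK p s1 t1 a b ≤ phi p a b := fun a b => by
    have k1 := corr_nonneg hp.le s1 t1 a b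
    have k2 := corr_nonneg hp.le s1 t1 b a
    unfold corrK; linarith
  have hterm : ∀ z : ZLat d × ZLat d, eTerm Adj (corrK p s1 t1) u z.1 z.2 ≤ eTerm Adj (phi p) u z.1 z.2 := by
    intro z
    unfold eTerm
    split_ifs with hA
    · exact ENNReal.ofReal_le_ofReal (hle _ _)
    · exact le_rfl
  have h3 : aEn Adj (corrK p s1 t1) u < aEn Adj (phi p) u := by
    unfold aEn
    refine ENNReal.tsum_lt_tsum (i := (x0, y0)) (ne_top_of_le_ne_top hfin (ENNReal.tsum_le_tsum hterm))
      hterm ?_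
    unfold eTerm
    simp only [if_pos hA0]
    have hlt : corrK p s1 t1 (u x0) (u y0) < phi p (u x0) (u y0) := by
      have k2 := corr_nonneg hp.le s1 t1 (u y0) (u x0)
      have k1 : 0 < corr p s1 t1 (u x0) (u y0) := by
        unfold corr
        have e1 : min ((u x0 : NNReal) : ℝ) s1 = 0 := by rw [hx0]; simp
        have e2 : max (t1 : ℝ) (u y0) = u y0 := max_eq_right (by exact_mod_cast ht1lt.le)
        rw [e1, e2]
        have := phi_strict hp 0 s1 t1 (u y0) (by exact_mod_cast hs1pos) (by exact_mod_cast ht1lt)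
        unfold mixQ
        linarith
      unfold corrK; linarith
    exact (ENNReal.ofReal_lt_ofReal_iff_of_nonneg (hcost.nonneg _ _)).2 hlt
  rw [h1, heq] at h2
  exact absurd h2 (not_le.2 h3)

/-- Discrete Pólya–Szegő inequality, with the characterization of the equality case
for p > 1 and strictly decreasing values. -/
theorem stmt16 (d : ℕ) (hd : 2 ≤ d) (p : ℝ) (hp : 1 ≤ p) (u : ZLat d → NNReal)
    (hu : (∑' x : ZLat d, (u x : ENNReal) ^ p) < ⊤) :
    gradNorm d p (RZd d u) ≤ gradNorm d p u ∧
    (1 < p → StrictRan u →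
      (gradNorm d p (RZd d u) = gradNorm d p u ↔
        ∃ σ : ZLat d ≃ ZLat d, IsLatAuto σ ∧ u = fun x => RZd d u (σ x))) := by
  have hadm := adm_of_sum hp hu
  have hfin := grad_fin hp hu
  refine ⟨(gradNorm_le hp _ _).2 (RZd_le hd (phi_cost hp) hadm), fun hp1 hs => ?_⟩
  rw [gradNorm_eq hp]
  constructor
  · intro heq
    have hpos := u_pos hd hp1 hadm hs hfin heq
    exact auto_of_symOf (symOf_RZd hd hp1 hadm (inj_of_strict hadm hs hpos) hfin heq)
  · rintro ⟨σ, hσ, h⟩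
    have := aEn_comp (A := Adj) (K := phi p) σ hσ (RZd d u)
    rw [← h] at this
    exact this.symm

end
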